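/- Let F₀ be a field of characteristic 0 that is finitely generated over ℚ. Then the set of triples (a, b, [Z₁ : Z₂ : Z₃]) with a, b ∈ ℤ and [Z₁ : Z₂ : Z₃] ∈ ℙ²(F₀) satisfying Z₁³ + Z₂³ + 9Z₃³ = 0, 3^a Z₁ + 3^b Z₂ + Z₃ = 0, and Z₁Z₂Z₃ ≠ 0, is finite. (Equivalently, all solutions of this system with a, b ∈ ℤ lie, with finitely many exceptions, in the set {(m, m, [1 : −1 : 0]) : m ∈ ℤ}.) -/

import Mathlib

/-!
On the affine chart `t = Z₁ / Z₂` the system becomes the cubic equation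
`t³ + 1 = 9(3^a t + 3^b)³` over `ℚ`, so `t` lies in the algebraic closure of `ℚ` in the field, a
number field; let `M` be its Galois closure over `ℚ`. As each cubic has at most three roots, it
suffices to bound `(a, b)`.

If `a = b`, or if `t` is irrational and hence has a second conjugate in `M`, then the discriminant
`-27((3^m - 3^n - 1)² - 4 · 3^n)`, with `m = 3a + 2` and `n = 3b + 2`, is a square in `M`. This
gives `e, f` in a fixed number field with `e f = 3^n` and `(1 + e)(1 + f) = 3^m`, so that `e` and
`1 + e` are units outside `3`, and the unit equation has finitely many solutions.

If `t = p / q` is rational and `a ≠ b`, then by symmetry `a < b`; a `3`-descent in the Eisenstein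
integers on `p³ + q³ + 9z³ = 0` shows that `p² - pq + q²` is at least a constant times `3^(54a)`,
whereas `|q| ≤ 3^(3a + 2)`. Hence `p³ + 9z³ = -q³` is small compared with `p`, which leaves finitely
many `p` by Thue's theorem.

Both finiteness results come from one statement about triples `a + b + c = 0` that are units up to a
small error at finitely many places. The integrals of `(X - α)^p (X - β)^q (X - γ)^r` between
the vertices of a triangle with sides `a, b, c` are Padé forms of small height in the sense of Thue
and Siegel. They keep two almost unit triples of very different heights from having nearly
proportional local heights, and compactness then bounds all heights.
-/

section BetaIntegrals

open Polynomial

variable {K : Type*} [Field K] [CharZero K]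

theorem exists_derivative_eq (p : K[X]) : ∃ F : K[X], derivative F = p := by
  induction p using Polynomial.induction_on' with
  | add p q hp hq =>
    obtain ⟨F, rfl⟩ := hp
    obtain ⟨G, rfl⟩ := hq
    exact ⟨F + G, derivative_add⟩
  | monomial n a =>
    have hn : (n : K) + 1 ≠ 0 := Nat.cast_add_one_ne_zero n
    exact ⟨monomial (n + 1) (a / (n + 1)), by simp [hn]⟩

theorem eval_eq_eval_of_derivative_eq_zero {F : K[X]} (hF : derivative F = 0) (x y : K) :
    F.eval x = F.eval y := by
  rw [eq_C_of_natDegree_eq_zero (derivative_eq_zero.mp hF), eval_C, eval_C]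

theorem eval_sub_eval_of_derivative_eq_sub_pow_mul_sub_pow (α β : K) (q p : ℕ) (G : K[X])
    (hG : derivative G = (X - C α) ^ p * (X - C β) ^ q) :
    (G.eval β - G.eval α) * ((p + q + 1).factorial : K) =
      (-1) ^ q * (β - α) ^ (p + q + 1) * (p.factorial * q.factorial : K) := by
  induction q generalizing p G with
  | zero =>
    have hderiv : derivative (C ((p : K) + 1) * G - (X - C α) ^ (p + 1)) = 0 := by
      rw [derivative_sub, derivative_C_mul, hG, derivative_X_sub_C_pow]
      simp
    have heval := eval_eq_eval_of_derivative_eq_zero hderiv β α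
    simp only [eval_sub, eval_mul, eval_C, eval_pow, eval_X, sub_self, zero_pow p.succ_ne_zero,
      sub_zero] at heval
    simp only [add_zero, Nat.factorial_succ, Nat.factorial_zero, Nat.cast_mul, Nat.cast_succ]
    linear_combination (p.factorial : K) * heval
  | succ q ih =>
    have hp : (p : K) + 1 ≠ 0 := Nat.cast_add_one_ne_zero p
    have hq : (q : K) + 1 ≠ 0 := Nat.cast_add_one_ne_zero q
    -- Integration by parts.
    let G' : K[X] := C ((q : K) + 1)⁻¹ *
      ((X - C α) ^ (p + 1) * (X - C β) ^ (q + 1) - C ((p : K) + 1) * G)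
    have hG' : derivative G' = (X - C α) ^ (p + 1) * (X - C β) ^ q := by
      have hinv : C ((q : K) + 1)⁻¹ * C ((q : K) + 1) = 1 := by
        rw [← C_mul, inv_mul_cancel₀ hq, C_1]
      rw [derivative_C_mul, derivative_sub, derivative_C_mul, hG, derivative_mul,
        derivative_X_sub_C_pow, derivative_X_sub_C_pow]
      simp only [Nat.add_sub_cancel, Nat.cast_add, Nat.cast_one, C_add, C_1,
        map_natCast] at hinv ⊢
      linear_combination (X - C α) ^ (p + 1) * (X - C β) ^ q * hinv
    have hparts : (G'.eval β - G'.eval α) * ((q : K) + 1) =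
        -((p : K) + 1) * (G.eval β - G.eval α) := by
      simp only [G', eval_mul, eval_sub, eval_pow, eval_C, eval_X, sub_self,
        zero_pow (Nat.succ_ne_zero _), mul_zero, zero_mul, zero_sub]
      field_simp
      ring
    have hrec := ih (p + 1) G' hG'
    rw [show p + (q + 1) + 1 = p + 1 + q + 1 by ring, Nat.factorial_succ q]
    rw [Nat.factorial_succ p] at hrec
    push_cast at hrec ⊢
    refine mul_left_cancel₀ hp ?_
    linear_combination ((p + 1 + q + 1).factorial : K) * hparts - ((q : K) + 1) * hrec

theorem factorial_mul_choose_mul_factorial_mul_factorial {p q r k : ℕ} (hk : k ≤ r) :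
    (p + q + r + 1).factorial * r.choose k * ((p + k).factorial * q.factorial) =
      (p + k).choose k * (p + q + r + 1).choose (r - k) * (p + q + k + 1).factorial *
        (p.factorial * q.factorial * r.factorial) := by
  obtain ⟨s, rfl⟩ := Nat.exists_eq_add_of_le hk
  have hr := Nat.choose_mul_factorial_mul_factorial (n := k + s) (k := k) (by omega)
  have hp := Nat.choose_mul_factorial_mul_factorial (n := p + k) (k := k) (by omega)
  have hs := Nat.choose_mul_factorial_mul_factorial (n := p + q + (k + s) + 1) (k := s) (by omega)
  rw [Nat.add_sub_cancel_left] at hr ⊢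
  rw [Nat.add_sub_cancel] at hp
  rw [show p + q + (k + s) + 1 - s = p + q + k + 1 by omega] at hs
  rw [← hr, ← hp, ← hs]
  ring

/-- The integral from `α` to `β` of the polynomial
`(p + q + r + 1)! / (p! q! r!) * (X - α) ^ p * (X - β) ^ q * (X - γ) ^ r`, written as an integral
polynomial in `u = α - γ` and `z = β - α`. -/
def betaIntegral {K : Type*} [CommRing K] (p q r : ℕ) (u z : K) : K :=
  (-1) ^ q * z ^ (p + q + 1) *
    ∑ k ∈ Finset.range (r + 1),
      (((p + k).choose k * (p + q + r + 1).choose (r - k) : ℕ) : K) * u ^ (r - k) * z ^ k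

theorem eval_sub_eval_eq_betaIntegral (α β γ : K) (p q r : ℕ) (F : K[X])
    (hF : derivative F * C ((p.factorial * q.factorial * r.factorial : ℕ) : K) =
      C ((p + q + r + 1).factorial : K) * ((X - C α) ^ p * (X - C β) ^ q * (X - C γ) ^ r)) :
    F.eval β - F.eval α = betaIntegral p q r (α - γ) (β - α) := by
  choose G hG using fun k : ℕ => exists_derivative_eq ((X - C α) ^ (p + k) * (X - C β) ^ q)
  have hexpand : (X - C γ) ^ r = ∑ k ∈ Finset.range (r + 1),
      (X - C α) ^ k * C (α - γ) ^ (r - k) * (r.choose k : K[X]) := by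
    rw [← add_pow, C_sub, sub_add_sub_cancel]
  have hderiv : derivative (F * C ((p.factorial * q.factorial * r.factorial : ℕ) : K) -
      C ((p + q + r + 1).factorial : K) * ∑ k ∈ Finset.range (r + 1),
        C ((α - γ) ^ (r - k) * (r.choose k : K)) * G k) = 0 := by
    rw [derivative_sub, derivative_mul, derivative_C, mul_zero, add_zero, hF, hexpand,
      derivative_C_mul, derivative_sum, sub_eq_zero, Finset.mul_sum]
    congr 1
    refine Finset.sum_congr rfl fun k _ => ?_
    rw [derivative_C_mul, hG]
    simp only [C_mul, C_pow, map_natCast]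
    ring
  have heval := eval_eq_eval_of_derivative_eq_zero hderiv β α
  simp only [eval_sub, eval_mul, eval_C, eval_finsetSum] at heval
  have hsum : (F.eval β - F.eval α) * ((p.factorial * q.factorial * r.factorial : ℕ) : K) =
      ((p + q + r + 1).factorial : K) * ∑ k ∈ Finset.range (r + 1),
        (α - γ) ^ (r - k) * (r.choose k : K) * ((G k).eval β - (G k).eval α) := by
    simp only [mul_sub, Finset.sum_sub_distrib]
    linear_combination heval
  have hfac : ((p.factorial * q.factorial * r.factorial : ℕ) : K) ≠ 0 :=
    Nat.cast_ne_zero.mpr (by positivity)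
  refine mul_right_cancel₀ hfac ?_
  rw [hsum, betaIntegral, Finset.mul_sum, Finset.mul_sum, Finset.sum_mul]
  refine Finset.sum_congr rfl fun k hk => ?_
  have hbeta := eval_sub_eval_of_derivative_eq_sub_pow_mul_sub_pow α β q (p + k) (G k) (hG k)
  have hchoose := congrArg (Nat.cast : ℕ → K) (factorial_mul_choose_mul_factorial_mul_factorial
    (p := p) (q := q) (Finset.mem_range_succ_iff.mp hk))
  rw [show p + k + q + 1 = p + q + 1 + k by ring, pow_add] at hbeta
  rw [show p + q + k + 1 = p + q + 1 + k by ring] at hchoose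
  refine mul_right_cancel₀ (Nat.cast_ne_zero.mpr (p + q + 1 + k).factorial_ne_zero : _ ≠ (0 : K)) ?_
  push_cast at hchoose ⊢
  linear_combination
    ((p + q + r + 1).factorial : K) * (α - γ) ^ (r - k) * (r.choose k : K) * hbeta +
    (α - γ) ^ (r - k) * (-1) ^ q * (β - α) ^ (p + q + 1) * (β - α) ^ k * hchoose

theorem exists_eval_sub_eval_eq_betaIntegral (α β γ : K) (p q r : ℕ) :
    ∃ F : K[X], ∃ c : K, c ≠ 0 ∧
      derivative F = C c * ((X - C α) ^ p * (X - C β) ^ q * (X - C γ) ^ r) ∧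
      F.eval β - F.eval α = betaIntegral p q r (α - γ) (β - α) ∧
      F.eval γ - F.eval β = betaIntegral q r p (β - α) (γ - β) ∧
      F.eval α - F.eval γ = betaIntegral r p q (γ - β) (α - γ) := by
  have hden : ((p.factorial * q.factorial * r.factorial : ℕ) : K) ≠ 0 :=
    Nat.cast_ne_zero.mpr (by positivity)
  have hnum : ((p + q + r + 1).factorial : K) ≠ 0 := Nat.cast_ne_zero.mpr (by positivity)
  obtain ⟨F, hF⟩ := exists_derivative_eq (C (((p + q + r + 1).factorial : K) /
    ((p.factorial * q.factorial * r.factorial : ℕ) : K)) *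
      ((X - C α) ^ p * (X - C β) ^ q * (X - C γ) ^ r))
  have hF' : derivative F * C ((p.factorial * q.factorial * r.factorial : ℕ) : K) =
      C ((p + q + r + 1).factorial : K) * ((X - C α) ^ p * (X - C β) ^ q * (X - C γ) ^ r) := by
    rw [hF, mul_right_comm, ← C_mul, div_mul_cancel₀ _ hden]
  refine ⟨F, _, div_ne_zero hnum hden, hF, eval_sub_eval_eq_betaIntegral α β γ p q r F hF',
    eval_sub_eval_eq_betaIntegral β γ α q r p F ?_, eval_sub_eval_eq_betaIntegral γ α β r p q F ?_⟩
  · rw [show q.factorial * r.factorial * p.factorial = p.factorial * q.factorial * r.factorial by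
      ring, show q + r + p + 1 = p + q + r + 1 by ring, hF']
    ring
  · rw [show r.factorial * p.factorial * q.factorial = p.factorial * q.factorial * r.factorial by
      ring, show r + p + q + 1 = p + q + r + 1 by ring, hF']
    ring

theorem betaIntegral_mem {K : Type*} [CommRing K] (O : Subring K) (p q r : ℕ) {u z : K}
    (hu : u ∈ O) (hz : z ∈ O) : betaIntegral p q r u z ∈ O :=
  mul_mem (mul_mem (pow_mem (neg_mem (one_mem O)) _) (pow_mem hz _))
    (sum_mem fun _ _ => mul_mem (mul_mem (natCast_mem O _) (pow_mem hu _)) (pow_mem hz _))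

theorem sum_choose_mul_choose_le {p q r N : ℕ} (hp : p ≤ N + 1) (hq : q ≤ N + 1)
    (hr : r ≤ N + 1) :
    ∑ k ∈ Finset.range (r + 1), (p + k).choose k * (p + q + r + 1).choose (r - k) ≤
      256 ^ (N + 1) := by
  have hterm : ∀ k ∈ Finset.range (r + 1),
      (p + k).choose k * (p + q + r + 1).choose (r - k) ≤ 2 ^ (5 * N + 6) := fun k hk =>
    calc (p + k).choose k * (p + q + r + 1).choose (r - k)
        ≤ 2 ^ (p + k) * 2 ^ (p + q + r + 1) :=
          Nat.mul_le_mul (Nat.choose_le_two_pow _ _) (Nat.choose_le_two_pow _ _)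
      _ = 2 ^ (p + k + (p + q + r + 1)) := by rw [← pow_add]
      _ ≤ 2 ^ (5 * N + 6) :=
          Nat.pow_le_pow_right two_pos (by have := Finset.mem_range.mp hk; omega)
  calc ∑ k ∈ Finset.range (r + 1), (p + k).choose k * (p + q + r + 1).choose (r - k)
      ≤ (r + 1) * 2 ^ (5 * N + 6) := by
        simpa using Finset.sum_le_card_nsmul _ _ _ hterm
    _ ≤ 2 ^ (N + 2) * 2 ^ (5 * N + 6) := by
        gcongr
        have := Nat.lt_two_pow_self (n := N + 2)
        omega
    _ = 2 ^ (6 * N + 8) := by rw [← pow_add]; ring_nf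
    _ ≤ 2 ^ (8 * (N + 1)) := Nat.pow_le_pow_right two_pos (by omega)
    _ = 256 ^ (N + 1) := by rw [pow_mul]; norm_num

theorem abv_betaIntegral_le {K : Type*} [CommRing K] [IsDomain K] {p q r N : ℕ} (hp : p ≤ N + 1)
    (hq : q ≤ N + 1) (hr : r ≤ N + 1) {u z : K} (v : AbsoluteValue K ℝ) {H : ℝ} (hu : v u ≤ H)
    (hz : v z ≤ H) :
    v (betaIntegral p q r u z) ≤ 256 ^ (N + 1) * v z ^ (p + q + 1) * H ^ r := by
  have hH : 0 ≤ H := (v.nonneg u).trans hu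
  have := v.nonneg u
  have := v.nonneg z
  have hterm : ∀ k ∈ Finset.range (r + 1),
      v ((((p + k).choose k * (p + q + r + 1).choose (r - k) : ℕ) : K) * u ^ (r - k) * z ^ k) ≤
        (((p + k).choose k * (p + q + r + 1).choose (r - k) : ℕ) : ℝ) * H ^ r := by
    intro k hk
    rw [map_mul, map_mul, map_pow, map_pow, mul_assoc,
      ← pow_sub_mul_pow H (Finset.mem_range_succ_iff.mp hk)]
    gcongr
    exact v.apply_nat_le_self _
  have hsum : v (∑ k ∈ Finset.range (r + 1),
      (((p + k).choose k * (p + q + r + 1).choose (r - k) : ℕ) : K) * u ^ (r - k) * z ^ k) ≤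
        256 ^ (N + 1) * H ^ r := by
    refine ((v.sum_le _ _).trans (Finset.sum_le_sum hterm)).trans ?_
    rw [← Finset.sum_mul, ← Nat.cast_sum]
    gcongr
    exact_mod_cast sum_choose_mul_choose_le hp hq hr
  rw [betaIntegral, map_mul, map_mul, map_pow, map_pow, v.map_neg, map_one, one_pow, one_mul,
    mul_comm (256 ^ (N + 1)), mul_assoc]
  gcongr

end BetaIntegrals

section PadeForms

open Polynomial

variable {K : Type*} [Field K] [CharZero K]

theorem X_sub_C_pow_succ_dvd {Q : K[X]} {α : K} {N : ℕ} (hroot : Q.IsRoot α)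
    (hderiv : (X - C α) ^ N ∣ derivative Q) : (X - C α) ^ (N + 1) ∣ Q := by
  rcases eq_or_ne Q 0 with rfl | hQ
  · exact dvd_zero _
  have hQ' : derivative Q ≠ 0 := by
    intro hzero
    rw [eq_C_of_natDegree_eq_zero (derivative_eq_zero.mp hzero), IsRoot, eval_C] at hroot
    exact hQ (by rw [eq_C_of_natDegree_eq_zero (derivative_eq_zero.mp hzero), hroot, C_0])
  have hmult := derivative_rootMultiplicity_of_root hroot
  have hN := (le_rootMultiplicity_iff hQ').mpr hderiv
  have hpos := (rootMultiplicity_pos hQ).mpr hroot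
  exact (le_rootMultiplicity_iff hQ).mp (by omega)

theorem eq_zero_of_derivative_eq_mul_prod {s : Finset K} {N : ℕ} {P g : K[X]}
    (hP : derivative P = g * ∏ x ∈ s, (X - C x) ^ N)
    (hconst : ∀ x ∈ s, ∀ y ∈ s, P.eval x = P.eval y)
    (hg : g.natDegree + 1 < s.card) : g = 0 := by
  obtain ⟨x₀, hx₀⟩ : s.Nonempty := Finset.card_pos.mp (by omega)
  have hprod : ∏ x ∈ s, (X - C x) ^ N ≠ 0 :=
    Finset.prod_ne_zero_iff.mpr fun x _ => pow_ne_zero _ (X_sub_C_ne_zero x)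
  set Q := P - C (P.eval x₀) with hQ
  have hQ' : derivative Q = g * ∏ x ∈ s, (X - C x) ^ N := by simp [hQ, hP]
  by_contra hg0
  have hQ0 : Q ≠ 0 := by
    intro hzero
    rw [hzero, derivative_zero] at hQ'
    exact mul_ne_zero hg0 hprod hQ'.symm
  have hdvd : ∏ x ∈ s, (X - C x) ^ (N + 1) ∣ Q := by
    refine Finset.prod_dvd_of_coprime (fun x _ y _ hxy =>
      (isCoprime_X_sub_C_of_isUnit_sub (sub_ne_zero.mpr hxy).isUnit).pow) fun x hx => ?_
    refine X_sub_C_pow_succ_dvd (by simp [hQ, hconst x hx x₀ hx₀]) ?_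
    exact hQ' ▸ (Finset.dvd_prod_of_mem (fun x => (X - C x) ^ N) hx).mul_left g
  have hdegree : ∀ n, (∏ x ∈ s, (X - C x) ^ n).natDegree = s.card * n := fun n => by
    rw [natDegree_prod _ _ fun x _ => pow_ne_zero _ (X_sub_C_ne_zero x)]
    simp
  have hlower := natDegree_le_of_dvd hdvd hQ0
  have hupper := natDegree_derivative Q
  rw [hQ', natDegree_mul hg0 hprod, hdegree] at hupper
  rw [hdegree, Nat.mul_succ] at hlower
  omega

/-- The `N`-th Padé forms of type `t ∈ {0, 1}` attached to a triple `a` with zero sum: the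
increments along the sides of the triangle with side vectors `a 0`, `a 1`, `a 2` of an
antiderivative of `(X - α) ^ (N + t) * (X - β) ^ N * (X - γ) ^ N`, where `α, β, γ` are the vertices.
They generalise the Padé approximants to binomial functions used by Thue and Siegel. -/
def padeForm {K : Type*} [CommRing K] (N t : ℕ) (a : Fin 3 → K) : Fin 3 → K :=
  ![betaIntegral N N (N + t) (a 2) (a 0), betaIntegral N (N + t) N (a 0) (a 1),
    betaIntegral (N + t) N N (a 1) (a 2)]

theorem padeForm_mem {K : Type*} [CommRing K] {O : Subring K} {a : Fin 3 → K}
    (haO : ∀ j, a j ∈ O) (N t : ℕ) (j : Fin 3) : padeForm N t a j ∈ O := by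
  fin_cases j <;> exact betaIntegral_mem O _ _ _ (haO _) (haO _)

theorem abv_padeForm_le {K : Type*} [CommRing K] [IsDomain K] {a : Fin 3 → K}
    (v : AbsoluteValue K ℝ) {H : ℝ} (hH : 1 ≤ H) (ha : ∀ j, v (a j) ≤ H) (N : ℕ) {t : ℕ}
    (ht : t ≤ 1) (j : Fin 3) :
    v (padeForm N t a j) ≤ 256 ^ (N + 1) * v (a j) ^ (2 * N + 1) * H ^ (N + 1) := by
  have hbound : ∀ {p q r : ℕ} (k : Fin 3), p ≤ N + t → q ≤ N + t → p + q + r = 3 * N + t →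
      2 * N ≤ p + q →
      v (betaIntegral p q r (a k) (a j)) ≤
        256 ^ (N + 1) * v (a j) ^ (2 * N + 1) * H ^ (N + 1) := by
    intro p q r k hp hq hsum hpq
    refine (abv_betaIntegral_le (N := N) (by omega) (by omega) (by omega) v (ha k) (ha j)).trans ?_
    have := v.nonneg (a j)
    obtain ⟨d, hd⟩ := Nat.exists_eq_add_of_le hpq
    calc 256 ^ (N + 1) * v (a j) ^ (p + q + 1) * H ^ r
        = 256 ^ (N + 1) * v (a j) ^ (2 * N + 1) * (v (a j) ^ d * H ^ r) := by rw [hd]; ring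
      _ ≤ 256 ^ (N + 1) * v (a j) ^ (2 * N + 1) * (H ^ d * H ^ r) := by gcongr; exact ha j
      _ ≤ 256 ^ (N + 1) * v (a j) ^ (2 * N + 1) * H ^ (N + 1) := by
          rw [← pow_add]
          have := pow_le_pow_right₀ hH (show d + r ≤ N + 1 by omega)
          gcongr
  fin_cases j <;> exact hbound _ (by omega) (by omega) (by omega) (by omega)

theorem exists_eval_sub_eval_eq_padeForm {a : Fin 3 → K} (ha : a 0 + a 1 + a 2 = 0) (N t : ℕ) :
    ∃ F : K[X], ∃ c : K, c ≠ 0 ∧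
      derivative F = C c * (X ^ t * (X ^ N * (X - C (a 2)) ^ N * (X - C (-a 1)) ^ N)) ∧
      F.eval (-a 1) - F.eval (a 2) = padeForm N t a 0 ∧
      F.eval 0 - F.eval (-a 1) = padeForm N t a 1 ∧
      F.eval (a 2) - F.eval 0 = padeForm N t a 2 := by
  obtain ⟨F, c, hc, hF, h₂, h₀, h₁⟩ :=
    exists_eval_sub_eval_eq_betaIntegral (0 : K) (a 2) (-a 1) (N + t) N N
  rw [show -a 1 - a 2 = a 0 by linear_combination -ha] at h₀ h₁
  simp only [sub_zero, zero_sub, neg_neg] at h₀ h₁ h₂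
  refine ⟨F, c, hc, ?_, h₀, h₁, h₂⟩
  rw [hF, C_0, sub_zero]
  ring

theorem padeForm_sum_eq_zero {a : Fin 3 → K} (ha : a 0 + a 1 + a 2 = 0) (N t : ℕ) :
    padeForm N t a 0 + padeForm N t a 1 + padeForm N t a 2 = 0 := by
  obtain ⟨F, c, -, -, h₀, h₁, h₂⟩ := exists_eval_sub_eval_eq_padeForm ha N t
  linear_combination -h₀ - h₁ - h₂

theorem eq_zero_of_mul_padeForm_add_mul_padeForm_eq_zero {a : Fin 3 → K}
    (ha : a 0 + a 1 + a 2 = 0) (ha0 : ∀ j, a j ≠ 0) {N : ℕ} {s t : K}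
    (hzero₀ : s * padeForm N 0 a 0 + t * padeForm N 1 a 0 = 0)
    (hzero₁ : s * padeForm N 0 a 1 + t * padeForm N 1 a 1 = 0) : s = 0 ∧ t = 0 := by
  classical
  obtain ⟨F, c, hc, hF, hF₀, hF₁, -⟩ := exists_eval_sub_eval_eq_padeForm ha N 0
  obtain ⟨F', c', hc', hF', hF'₀, hF'₁, -⟩ := exists_eval_sub_eval_eq_padeForm ha N 1
  have h01 : (0 : K) ≠ a 2 := (ha0 2).symm
  have h02 : (0 : K) ≠ -a 1 := (neg_ne_zero.mpr (ha0 1)).symm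
  have h12 : a 2 ≠ -a 1 := fun h => ha0 0 (by linear_combination ha - h)
  set P := C s * F + C t * F' with hP
  have hP₀ : P.eval (-a 1) = P.eval (a 2) := by
    simp only [hP, eval_add, eval_mul, eval_C]
    linear_combination s * hF₀ + t * hF'₀ + hzero₀
  have hP₁ : P.eval 0 = P.eval (a 2) := by
    rw [← hP₀]
    simp only [hP, eval_add, eval_mul, eval_C]
    linear_combination s * hF₁ + t * hF'₁ + hzero₁
  have hderiv : derivative P =
      (C (t * c') * X + C (s * c)) * ∏ x ∈ ({0, a 2, -a 1} : Finset K), (X - C x) ^ N := by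
    rw [Finset.prod_insert (by simp [h01, h02]), Finset.prod_insert (by simp [h12]),
      Finset.prod_singleton, hP, derivative_add, derivative_C_mul, derivative_C_mul, hF, hF']
    simp only [C_mul, C_0, sub_zero]
    ring
  have hlinear : C (t * c') * X + C (s * c) = 0 := by
    refine eq_zero_of_derivative_eq_mul_prod hderiv (by simp [hP₀, hP₁]) ?_
    rw [Finset.card_eq_three.mpr ⟨0, a 2, -a 1, h01, h02, h12, rfl⟩]
    exact (Nat.succ_le_succ natDegree_linear_le).trans_lt (by norm_num)
  exact ⟨by simpa [hc] using congrArg (coeff · 0) hlinear,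
    by simpa [hc'] using congrArg (coeff · 1) hlinear⟩

theorem padeForm_det_ne_zero {a : Fin 3 → K} (ha : a 0 + a 1 + a 2 = 0) (ha0 : ∀ j, a j ≠ 0)
    (N : ℕ) :
    padeForm N 0 a 0 * padeForm N 1 a 1 - padeForm N 0 a 1 * padeForm N 1 a 0 ≠ 0 := by
  intro hdet
  obtain ⟨s, hs, hzero⟩ := Matrix.exists_vecMul_eq_zero_iff.mpr
    (show !![padeForm N 0 a 0, padeForm N 0 a 1; padeForm N 1 a 0, padeForm N 1 a 1].det = 0 by
      rwa [Matrix.det_fin_two_of])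
  have hs' := eq_zero_of_mul_padeForm_add_mul_padeForm_eq_zero ha ha0 (s := s 0) (t := s 1)
    (by simpa [Matrix.vecMul, dotProduct] using congrFun hzero 0)
    (by simpa [Matrix.vecMul, dotProduct] using congrFun hzero 1)
  exact hs (funext (Fin.forall_fin_two.mpr hs'))

theorem exists_padeForm_mul_sub_ne_zero {a b : Fin 3 → K} (ha : a 0 + a 1 + a 2 = 0)
    (ha0 : ∀ j, a j ≠ 0) (hb : b 1 ≠ 0) (N : ℕ) :
    ∃ t ≤ 1, padeForm N t a 0 * b 1 - padeForm N t a 1 * b 0 ≠ 0 := by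
  by_contra! hall
  have hzero := hall 0 zero_le_one
  have hone := hall 1 le_rfl
  refine padeForm_det_ne_zero ha ha0 N (mul_right_cancel₀ hb ?_)
  linear_combination padeForm N 1 a 1 * hzero - padeForm N 0 a 1 * hone

end PadeForms

section ThueSiegel

open Filter

/-- The logarithm of the local height of the triple `a` at the absolute value `v`. -/
noncomputable def logSup {K : Type*} [Field K] (v : AbsoluteValue K ℝ) (a : Fin 3 → K) : ℝ :=
  Finset.univ.sup' Finset.univ_nonempty fun j => Real.log (v (a j))

/-- The logarithmic height of the triple `a` with respect to a finite family `v` of absolute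
values. Coordinates equal to `0` contribute `log 0 = 0`, so it is meaningful only for triples of
nonzero elements. -/
noncomputable def logHeight {K ι : Type*} [Field K] [Fintype ι] (v : ι → AbsoluteValue K ℝ)
    (a : Fin 3 → K) : ℝ :=
  ∑ i, logSup (v i) a

/-- The triples to which the Thue–Siegel method applies: solutions of `a 0 + a 1 + a 2 = 0` in
nonzero elements of `O` that are locally not small and whose coordinates are, in the sense of the
product over the family `v`, almost units. The exponent `κ` measures the deviation from units. -/
structure IsAlmostUnitTriple {K ι : Type*} [Field K] [Fintype ι] (O : Subring K)
    (v : ι → AbsoluteValue K ℝ) (κ : ℝ) (a : Fin 3 → K) : Prop where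
  mem : ∀ j, a j ∈ O
  ne_zero : ∀ j, a j ≠ 0
  sum_eq_zero : a 0 + a 1 + a 2 = 0
  logSup_nonneg : ∀ i, 0 ≤ logSup (v i) a
  sum_log_le : ∑ i, ∑ j, Real.log (v i (a j)) ≤ κ * logHeight v a

section Local

variable {K : Type*} [Field K]

theorem log_abv_le_logSup (v : AbsoluteValue K ℝ) (a : Fin 3 → K) (j : Fin 3) :
    Real.log (v (a j)) ≤ logSup v a :=
  Finset.le_sup' (fun j => Real.log (v (a j))) (Finset.mem_univ j)

theorem exists_logSup_eq (v : AbsoluteValue K ℝ) (a : Fin 3 → K) :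
    ∃ j, logSup v a = Real.log (v (a j)) :=
  let ⟨j, _, hj⟩ := Finset.exists_mem_eq_sup' Finset.univ_nonempty fun j => Real.log (v (a j))
  ⟨j, hj⟩

theorem abv_mul_sub_mul_le (v : AbsoluteValue K ℝ) (x y z w : K) :
    v (x * y - z * w) ≤ v x * v y + v z * v w := by
  simpa only [map_mul, sub_eq_add_neg, v.map_neg] using v.add_le (x * y) (-(z * w))

variable {v : AbsoluteValue K ℝ} {a b : Fin 3 → K} {N t : ℕ} {E : ℝ}

theorem log_abv_padeForm_mul_sub_le (ha0 : ∀ j, a j ≠ 0) (hb0 : ∀ j, b j ≠ 0)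
    (hsup : 0 ≤ logSup v a) (ht : t ≤ 1)
    (hE : ∀ j, Real.log (v (b j)) ≤ (2 * N + 1) * Real.log (v (a j)) + E) {j k : Fin 3}
    (hne : padeForm N t a j * b k - padeForm N t a k * b j ≠ 0) :
    Real.log (v (padeForm N t a j * b k - padeForm N t a k * b j)) ≤
      Real.log 2 + (N + 1) * Real.log 256 + E + (N + 1) * logSup v a +
        (2 * N + 1) * (Real.log (v (a j)) + Real.log (v (a k))) := by
  have hva : ∀ j, 0 < v (a j) := fun j => v.pos (ha0 j)
  set H := Real.exp (logSup v a) with hH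
  have hvaH : ∀ j, v (a j) ≤ H := fun j =>
    (Real.log_le_iff_le_exp (hva j)).mp (log_abv_le_logSup v a j)
  have hI := abv_padeForm_le v (Real.one_le_exp hsup) hvaH N ht
  have hvb : ∀ j, v (b j) ≤ v (a j) ^ (2 * N + 1) * Real.exp E := fun j => by
    have hpow : 0 < v (a j) ^ (2 * N + 1) := pow_pos (hva j) _
    rw [← Real.log_le_log_iff (v.pos (hb0 j)) (by positivity), Real.log_mul hpow.ne'
      (Real.exp_ne_zero _), Real.log_exp, Real.log_pow]
    exact_mod_cast hE j
  have hj := hva j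
  have hk := hva k
  have hle : v (padeForm N t a j * b k - padeForm N t a k * b j) ≤ 2 * (256 ^ (N + 1) *
      Real.exp E * H ^ (N + 1) * (v (a j) ^ (2 * N + 1) * v (a k) ^ (2 * N + 1))) := by
    calc _ ≤ v (padeForm N t a j) * v (b k) + v (padeForm N t a k) * v (b j) :=
          abv_mul_sub_mul_le v _ _ _ _
      _ ≤ 256 ^ (N + 1) * v (a j) ^ (2 * N + 1) * H ^ (N + 1) *
            (v (a k) ^ (2 * N + 1) * Real.exp E) +
          256 ^ (N + 1) * v (a k) ^ (2 * N + 1) * H ^ (N + 1) *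
            (v (a j) ^ (2 * N + 1) * Real.exp E) := by
          gcongr
          exacts [hI j, hvb k, hI k, hvb j]
      _ = _ := by ring
  refine (Real.log_le_log (v.pos hne) hle).trans_eq ?_
  rw [Real.log_mul (by norm_num) (by positivity), Real.log_mul (by positivity) (by positivity),
    Real.log_mul (by positivity) (by positivity), Real.log_mul (by positivity) (by positivity),
    Real.log_mul (by positivity) (by positivity), Real.log_pow, Real.log_pow, Real.log_pow,
    Real.log_pow, Real.log_exp, hH, Real.log_exp]
  push_cast
  ring

-- The determinant is the same for each pair of indices; use the pair avoiding the index at which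
-- `v` is largest on `a`.
theorem log_abv_padeForm_det_le [CharZero K] (ha0 : ∀ j, a j ≠ 0) (ha : a 0 + a 1 + a 2 = 0)
    (hb0 : ∀ j, b j ≠ 0) (hb : b 0 + b 1 + b 2 = 0) (hsup : 0 ≤ logSup v a) (ht : t ≤ 1)
    (hE : ∀ j, Real.log (v (b j)) ≤ (2 * N + 1) * Real.log (v (a j)) + E)
    (hne : padeForm N t a 0 * b 1 - padeForm N t a 1 * b 0 ≠ 0) :
    Real.log (v (padeForm N t a 0 * b 1 - padeForm N t a 1 * b 0)) ≤
      Real.log 2 + (N + 1) * Real.log 256 + E - N * logSup v a +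
        (2 * N + 1) * ∑ j, Real.log (v (a j)) := by
  have hI := padeForm_sum_eq_zero ha N t
  have h12 : padeForm N t a 0 * b 1 - padeForm N t a 1 * b 0 =
      padeForm N t a 1 * b 2 - padeForm N t a 2 * b 1 := by
    linear_combination b 1 * hI - padeForm N t a 1 * hb
  have h20 : padeForm N t a 0 * b 1 - padeForm N t a 1 * b 0 =
      padeForm N t a 2 * b 0 - padeForm N t a 0 * b 2 := by
    linear_combination -b 0 * hI + padeForm N t a 0 * hb
  have hbound := @log_abv_padeForm_mul_sub_le K _ v a b N t E ha0 hb0 hsup ht hE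
  rw [Fin.sum_univ_three]
  match exists_logSup_eq v a with
  | ⟨0, hmax⟩ =>
    rw [h12] at hne ⊢
    linear_combination hbound hne + (2 * N + 1) * hmax
  | ⟨1, hmax⟩ =>
    rw [h20] at hne ⊢
    linear_combination hbound hne + (2 * N + 1) * hmax
  | ⟨2, hmax⟩ => linear_combination hbound hne + (2 * N + 1) * hmax

end Local

section Global

variable {K ι : Type*} [Field K] [Fintype ι] {O : Subring K} {v : ι → AbsoluteValue K ℝ}

theorem sum_log_abv_nonneg (hv : ∀ x ∈ O, x ≠ 0 → 1 ≤ ∏ i, v i x) {x : K} (hx : x ∈ O)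
    (hx0 : x ≠ 0) : 0 ≤ ∑ i, Real.log (v i x) := by
  rw [← Real.log_prod fun i _ => ((v i).pos hx0).ne']
  exact Real.log_nonneg (hv x hx hx0)

theorem logSup_le_logHeight {a : Fin 3 → K} (hsup : ∀ i, 0 ≤ logSup (v i) a) (i : ι) :
    logSup (v i) a ≤ logHeight v a :=
  Finset.single_le_sum (fun i _ => hsup i) (Finset.mem_univ i)

theorem abs_log_abv_le_card_mul_logHeight (hv : ∀ x ∈ O, x ≠ 0 → 1 ≤ ∏ i, v i x)
    {a : Fin 3 → K} (haO : ∀ j, a j ∈ O) (ha0 : ∀ j, a j ≠ 0) (hsup : ∀ i, 0 ≤ logSup (v i) a)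
    (i : ι) (j : Fin 3) :
    |Real.log (v i (a j))| ≤ Fintype.card ι * logHeight v a := by
  classical
  have hle : ∀ k, Real.log (v k (a j)) ≤ logHeight v a := fun k =>
    (log_abv_le_logSup (v k) a j).trans (logSup_le_logHeight hsup k)
  have hsum := sum_log_abv_nonneg hv (haO j) (ha0 j)
  rw [← Finset.add_sum_erase _ _ (Finset.mem_univ i)] at hsum
  have herase := Finset.sum_le_card_nsmul (Finset.univ.erase i) _ _ fun k _ => hle k
  have hcard : ((Finset.univ.erase i).card : ℝ) + 1 = Fintype.card ι := by
    exact_mod_cast Finset.card_erase_add_one (Finset.mem_univ i)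
  have hheight : 0 ≤ logHeight v a := Finset.sum_nonneg fun k _ => hsup k
  have hpos : 0 ≤ ((Finset.univ.erase i).card : ℝ) * logHeight v a := by positivity
  rw [nsmul_eq_mul] at herase
  rw [← hcard, abs_le]
  constructor <;> linarith [hle i]

theorem logHeight_inequality_of_padeForm [CharZero K]
    (hv : ∀ x ∈ O, x ≠ 0 → 1 ≤ ∏ i, v i x) {a b : Fin 3 → K}
    (haO : ∀ j, a j ∈ O) (ha0 : ∀ j, a j ≠ 0) (ha : a 0 + a 1 + a 2 = 0)
    (hsup : ∀ i, 0 ≤ logSup (v i) a) (hbO : ∀ j, b j ∈ O) (hb0 : ∀ j, b j ≠ 0)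
    (hb : b 0 + b 1 + b 2 = 0) {N : ℕ} {E : ℝ}
    (hE : ∀ i j, Real.log (v i (b j)) ≤ (2 * N + 1) * Real.log (v i (a j)) + E) :
    0 ≤ Fintype.card ι * (Real.log 2 + (N + 1) * Real.log 256 + E) - N * logHeight v a +
      (2 * N + 1) * ∑ i, ∑ j, Real.log (v i (a j)) := by
  obtain ⟨t, ht, hne⟩ := exists_padeForm_mul_sub_ne_zero ha ha0 (hb0 1) N
  have hmem : padeForm N t a 0 * b 1 - padeForm N t a 1 * b 0 ∈ O :=
    sub_mem (mul_mem (padeForm_mem haO N t 0) (hbO 1)) (mul_mem (padeForm_mem haO N t 1) (hbO 0))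
  refine ((sum_log_abv_nonneg hv hmem hne).trans (Finset.sum_le_sum fun i _ =>
    log_abv_padeForm_det_le ha0 ha hb0 hb (hsup i) ht (hE i) hne)).trans_eq ?_
  rw [Finset.sum_add_distrib, Finset.sum_sub_distrib, ← Finset.mul_sum, ← Finset.mul_sum,
    Finset.sum_const, Finset.card_univ, nsmul_eq_mul, logHeight]

end Global

theorem exists_le_and_mul_le_and_dist_lt {E : Type*} [PseudoMetricSpace E] [ProperSpace E]
    {w : ℕ → E} (hw : Bornology.IsBounded (Set.range w)) {H : ℕ → ℝ}
    (hH : Tendsto H atTop atTop) {ε : ℝ} (hε : 0 < ε) (A R : ℝ) :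
    ∃ m n, A ≤ H m ∧ R * H m ≤ H n ∧ dist (w n) (w m) < ε := by
  obtain ⟨_, -, φ, hφ, hlim⟩ := tendsto_subseq_of_bounded hw fun n => Set.mem_range_self n
  obtain ⟨k, hk⟩ := Metric.cauchySeq_iff.mp hlim.cauchySeq ε hε
  have hHφ := hH.comp hφ.tendsto_atTop
  obtain ⟨m, hm, hAm⟩ := ((eventually_ge_atTop k).and (hHφ.eventually_ge_atTop A)).exists
  obtain ⟨n, hn, hRn⟩ :=
    ((eventually_ge_atTop k).and (hHφ.eventually_ge_atTop (R * H (φ m)))).exists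
  exact ⟨φ m, φ n, hAm, hRn, hk n hn m hm⟩

theorem thueSiegel_parameters_contradiction {c δ κ ε h N D E k : ℝ} (hc : 0 ≤ c) (hδ : 0 < δ)
    (hκ : 2 * κ = 1 - δ) (hε : ε = δ / (24 * (c + 1))) (hh : 0 < h) (hch : 160 * c ≤ h * δ)
    (hcN : 16 * c ^ 2 ≤ N * δ) (hN : 1 ≤ N * δ) (hN3 : 3 ≤ N) (hk : k ≤ 20 * N)
    (hE : E = (2 * N + 3) * h * ε + 2 * h * c) (hD : D ≤ κ * h)
    (hineq : 0 ≤ c * (k + E) - N * h + (2 * N + 1) * D) : False := by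
  have hN0 : 0 < N := by linarith
  have hNhδ : 0 < N * h * δ := by positivity
  have hcε : 24 * (c * ε) ≤ δ := by
    rw [hε]
    field_simp
    linarith
  have hterm_k : 8 * (c * k) ≤ N * h * δ := by
    linear_combination 8 * c * hk + N * hch
  have hterm_ε : 8 * (c * ((2 * N + 3) * h * ε)) ≤ N * h * δ := by
    have hcε0 : 0 ≤ c * ε := by rw [hε]; positivity
    have : (2 * N + 3) * h * (c * ε) ≤ 3 * N * h * (c * ε) := by gcongr; linarith
    linear_combination 8 * this + N * h * hcε
  have hterm_c : 8 * (c * (2 * h * c)) ≤ N * h * δ := by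
    linear_combination h * hcN
  have hterm_D : (2 * N + 1) * D ≤ N * h + h / 2 - N * h * δ := by
    have hmul : (2 * N + 1) * D ≤ (2 * N + 1) * (κ * h) := by gcongr
    have : 0 ≤ h * δ := by positivity
    linear_combination hmul + (2 * N + 1) * h / 2 * hκ + this / 2
  have hterm_h : h ≤ N * h * δ := by linear_combination h * hN
  rw [hE] at hineq
  linarith

theorem log_two_add_mul_log_le {N : ℝ} (hN : 3 ≤ N) :
    Real.log 2 + (N + 1) * Real.log 256 ≤ 20 * N := by
  have h256 : Real.log 256 = 8 * Real.log 2 := by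
    rw [show (256 : ℝ) = 2 ^ 8 by norm_num, Real.log_pow]
    norm_num
  have hlog := Real.log_two_lt_d9
  rw [h256]
  nlinarith

-- The heights of `a` and `b` have ratio about `2 * N + 1`, so an approximate proportionality of
-- the two vectors of logarithms is what `logHeight_inequality_of_padeForm` asks for.
theorem log_le_mul_log_add_of_dist_le {x y h h' ε M : ℝ} {N : ℕ} (hh : 0 < h) (hh' : 0 < h')
    (hε : 0 ≤ ε) (hM : 0 ≤ M) (hlower : (2 * N + 1) * h ≤ h') (hupper : h' ≤ (2 * N + 3) * h)
    (hx : x ≤ M * h) (hdist : |y / h' - x / h| ≤ ε) :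
    y ≤ (2 * N + 1) * x + ((2 * N + 3) * h * ε + 2 * h * M) := by
  have hy : y ≤ h' * (x / h + ε) := by
    rw [← div_le_iff₀' hh']
    linarith [(abs_le.mp hdist).2]
  have hxh : x / h ≤ M := (div_le_iff₀ hh).mpr hx
  calc y ≤ (2 * N + 1) * (h * (x / h)) + ((h' - (2 * N + 1) * h) * (x / h) + h' * ε) := by
        linarith
    _ ≤ (2 * N + 1) * (h * (x / h)) + ((h' - (2 * N + 1) * h) * M + h' * ε) := by
        gcongr
    _ ≤ (2 * N + 1) * (h * (x / h)) + (2 * h * M + (2 * N + 3) * h * ε) := by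
        gcongr
        linarith
    _ = (2 * N + 1) * x + ((2 * N + 3) * h * ε + 2 * h * M) := by
        rw [mul_div_cancel₀ _ hh.ne']
        ring

theorem exists_nat_mul_le_and_le_mul {h h' : ℝ} (hh : 0 < h) {R : ℝ} (hR : 0 ≤ R)
    (hle : (2 * R + 1) * h ≤ h') :
    ∃ N : ℕ, R - 1 ≤ N ∧ (2 * N + 1) * h ≤ h' ∧ h' ≤ (2 * N + 3) * h := by
  have hratio : R ≤ (h' / h - 1) / 2 := by
    have : 2 * R + 1 ≤ h' / h := (le_div_iff₀ hh).mpr hle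
    linarith
  have hfloor := Nat.floor_le (hR.trans hratio)
  have hlt := Nat.lt_floor_add_one ((h' / h - 1) / 2)
  refine ⟨⌊(h' / h - 1) / 2⌋₊, by linarith, ?_, ?_⟩
  · rw [← le_div_iff₀ hh]
    linarith
  · rw [← div_le_iff₀ hh]
    linarith

section HeightBound

variable {K ι : Type*} [Field K] [CharZero K] [Fintype ι] {O : Subring K}
  {v : ι → AbsoluteValue K ℝ}

theorem IsAlmostUnitTriple.logHeight_gap (hv : ∀ x ∈ O, x ≠ 0 → 1 ≤ ∏ i, v i x) {κ : ℝ}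
    (hκ : κ < 1 / 2) :
    ∃ ε > 0, ∃ A R : ℝ, ∀ a b : Fin 3 → K, IsAlmostUnitTriple O v κ a → IsAlmostUnitTriple O v κ b →
      A ≤ logHeight v a → R * logHeight v a ≤ logHeight v b →
      ∃ i j, ε < |Real.log (v i (b j)) / logHeight v b - Real.log (v i (a j)) / logHeight v a| := by
  set c : ℝ := (Fintype.card ι : ℝ)
  have hc0 : 0 ≤ c := Nat.cast_nonneg _
  set δ := 1 - 2 * κ with hδ
  have hδ0 : 0 < δ := by linarith
  set R := 16 * c ^ 2 / δ + 1 / δ + 4 with hR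
  have hR0 : 0 ≤ R := by positivity
  refine ⟨δ / (24 * (c + 1)), by positivity, 160 * c / δ + 1, 2 * R + 1,
    fun a b ha hb hAa hRb => ?_⟩
  set h := logHeight v a
  have hh : 0 < h := lt_of_lt_of_le (by positivity) hAa
  by_contra! hdist
  obtain ⟨N, hRN, hlower, hupper⟩ := exists_nat_mul_le_and_le_mul hh hR0 hRb
  rw [hR] at hRN
  have hbound := abs_log_abv_le_card_mul_logHeight hv ha.mem ha.ne_zero ha.logSup_nonneg
  have hineq := logHeight_inequality_of_padeForm hv ha.mem ha.ne_zero ha.sum_eq_zero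
    ha.logSup_nonneg hb.mem hb.ne_zero hb.sum_eq_zero fun i j =>
      log_le_mul_log_add_of_dist_le hh (lt_of_lt_of_le (by positivity) hlower) (by positivity) hc0
        hlower hupper ((le_abs_self _).trans (hbound i j)) (hdist i j)
  have hc_div : 0 ≤ 16 * c ^ 2 / δ := by positivity
  have hone_div : 0 ≤ 1 / δ := by positivity
  have hN3 : (3 : ℝ) ≤ N := by linarith
  exact thueSiegel_parameters_contradiction hc0 hδ0 (by rw [hδ]; ring) rfl hh
    ((div_le_iff₀ hδ0).mp (by linarith)) ((div_le_iff₀ hδ0).mp (by linarith))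
    ((div_le_iff₀ hδ0).mp (by linarith)) hN3 (log_two_add_mul_log_le hN3) rfl ha.sum_log_le hineq

theorem IsAlmostUnitTriple.exists_logHeight_le (hv : ∀ x ∈ O, x ≠ 0 → 1 ≤ ∏ i, v i x) {κ : ℝ}
    (hκ : κ < 1 / 2) :
    ∃ B : ℝ, ∀ a : Fin 3 → K, IsAlmostUnitTriple O v κ a → logHeight v a ≤ B := by
  by_contra! hunbounded
  choose a ha hlarge using fun n : ℕ => hunbounded n
  obtain ⟨ε, hε, A, R, hgap⟩ := IsAlmostUnitTriple.logHeight_gap hv hκ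
  have hpos : ∀ n, 0 < logHeight v (a n) := fun n => (Nat.cast_nonneg n).trans_lt (hlarge n)
  let w : ℕ → ι × Fin 3 → ℝ := fun n x => Real.log (v x.1 (a n x.2)) / logHeight v (a n)
  have hw : Bornology.IsBounded (Set.range w) := by
    refine Metric.isBounded_closedBall.subset (Set.range_subset_iff.mpr fun n =>
      mem_closedBall_zero_iff.mpr ((pi_norm_le_iff_of_nonneg
        (Nat.cast_nonneg (Fintype.card ι))).mpr fun x => ?_))
    rw [Real.norm_eq_abs, abs_div, abs_of_pos (hpos n), div_le_iff₀ (hpos n)]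
    exact abs_log_abv_le_card_mul_logHeight hv (ha n).mem (ha n).ne_zero (ha n).logSup_nonneg _ _
  have htendsto : Tendsto (fun n => logHeight v (a n)) atTop atTop :=
    tendsto_atTop_mono (fun n => (hlarge n).le) tendsto_natCast_atTop_atTop
  obtain ⟨m, n, hAm, hRn, hdist⟩ := exists_le_and_mul_le_and_dist_lt hw htendsto hε A R
  obtain ⟨i, j, hij⟩ := hgap (a m) (a n) (ha m) (ha n) hAm hRn
  exact (hij.trans_le (dist_le_pi_dist (w n) (w m) (i, j))).not_gt hdist

end HeightBound

end ThueSiegel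

section Places

open NumberField

/-- The subring of `p`-integers of a field: the elements that become integral over `ℤ` after
multiplication by some power of `p`. -/
def pIntegers (p : ℕ) (M : Type*) [Field M] : Subring M where
  carrier := {x | ∃ k : ℕ, IsIntegral ℤ ((p : M) ^ k * x)}
  mul_mem' := by
    rintro x y ⟨k, hk⟩ ⟨l, hl⟩
    refine ⟨k + l, ?_⟩
    rw [show (p : M) ^ (k + l) * (x * y) = p ^ k * x * (p ^ l * y) by ring]
    exact hk.mul hl
  one_mem' := ⟨0, by simpa using isIntegral_one⟩
  add_mem' := by
    rintro x y ⟨k, hk⟩ ⟨l, hl⟩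
    have hp (n : ℕ) : IsIntegral ℤ ((p : M) ^ n) := (isIntegral_natCast p).pow n
    refine ⟨k + l, ?_⟩
    rw [show (p : M) ^ (k + l) * (x + y) = p ^ l * (p ^ k * x) + p ^ k * (p ^ l * y) by ring]
    exact ((hp l).mul hk).add ((hp k).mul hl)
  zero_mem' := ⟨0, by simpa using isIntegral_zero⟩
  neg_mem' := by
    rintro x ⟨k, hk⟩
    exact ⟨k, by simpa only [mul_neg] using hk.neg⟩

theorem mem_pIntegers_of_sq_sub_mul_add_eq_zero {p : ℕ} {M : Type*} [Field M] {s c e : M}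
    (hs : s ∈ pIntegers p M) (hc : c ∈ pIntegers p M) (he : e ^ 2 - s * e + c = 0) :
    e ∈ pIntegers p M := by
  obtain ⟨k, hk⟩ := hs
  obtain ⟨l, hl⟩ := hc
  have hp (n : ℕ) : IsIntegral ℤ ((p : M) ^ n) := (isIntegral_natCast p).pow n
  let S : integralClosure ℤ M := ⟨p ^ l * (p ^ k * s), (hp l).mul hk⟩
  let C : integralClosure ℤ M := ⟨p ^ (2 * k + l) * (p ^ l * c), (hp _).mul hl⟩
  have : IsIntegral (integralClosure ℤ M) ((p : M) ^ (k + l) * e) := by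
    refine ⟨.X ^ 2 - .C S * .X + .C C, by monicity!, ?_⟩
    simp only [Polynomial.eval₂_add, Polynomial.eval₂_sub, Polynomial.eval₂_mul,
      Polynomial.eval₂_pow, Polynomial.eval₂_X, Polynomial.eval₂_C]
    change ((p : M) ^ (k + l) * e) ^ 2 - (p ^ l * (p ^ k * s)) * ((p : M) ^ (k + l) * e) +
      p ^ (2 * k + l) * (p ^ l * c) = 0
    linear_combination (p : M) ^ (2 * (k + l)) * he
  exact ⟨k + l, isIntegral_trans _ this⟩

theorem natCast_zpow_mem_pIntegers {p : ℕ} {M : Type*} [Field M] (hp : (p : M) ≠ 0) (n : ℤ) :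
    (p : M) ^ n ∈ pIntegers p M := by
  obtain ⟨k, rfl | rfl⟩ := n.eq_nat_or_neg
  · rw [zpow_natCast]
    exact pow_mem (natCast_mem _ p) k
  · refine ⟨k, ?_⟩
    rw [zpow_neg, zpow_natCast, mul_inv_cancel₀ (pow_ne_zero k hp)]
    exact isIntegral_one

variable {M : Type*} [Field M] [Algebra ℚ M]

theorem prod_norm_algHom_eq_norm_algebraMap_norm [FiniteDimensional ℚ M] {L : Type*} [NormedField L]
    [IsAlgClosed L] [Algebra ℚ L] (x : M) :
    ∏ σ : M →ₐ[ℚ] L, ‖σ x‖ = ‖algebraMap ℚ L (Algebra.norm ℚ x)‖ := by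
  have : CharZero M := algebraRat.charZero M
  rw [← norm_prod, Algebra.norm_eq_prod_embeddings ℚ L x]

theorem exists_intCast_eq_norm_of_isIntegral [FiniteDimensional ℚ M] {x : M} (hx : IsIntegral ℤ x)
    (hx0 : x ≠ 0) : ∃ n : ℤ, n ≠ 0 ∧ (n : ℚ) = Algebra.norm ℚ x := by
  obtain ⟨n, hn⟩ := IsIntegrallyClosed.isIntegral_iff.mp (Algebra.isIntegral_norm ℚ hx)
  refine ⟨n, ?_, hn⟩
  rintro rfl
  exact Algebra.norm_ne_zero_iff.mpr hx0 (hn.symm.trans (map_zero _))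

theorem one_le_prod_place_of_isIntegral [FiniteDimensional ℚ M] {x : M} (hx : IsIntegral ℤ x)
    (hx0 : x ≠ 0) : 1 ≤ ∏ σ : M →ₐ[ℚ] ℂ, place σ.toRingHom x := by
  obtain ⟨n, hn0, hn⟩ := exists_intCast_eq_norm_of_isIntegral hx hx0
  calc (1 : ℝ) ≤ |(n : ℝ)| := by exact_mod_cast Int.one_le_abs hn0
    _ = _ := by
      refine .trans ?_ (prod_norm_algHom_eq_norm_algebraMap_norm x).symm
      simp [← hn]

variable (p : ℕ) [Fact p.Prime]

/-- The absolute values of a number field `M` lying above the places `∞` and `p` of `ℚ`, indexed by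
the embeddings of `M` into `ℂ` and `ℚ̄_p`; a place occurs as often as its local degree. -/
noncomputable def placeAbove :
    (M →ₐ[ℚ] ℂ) ⊕ (M →ₐ[ℚ] PadicAlgCl p) → AbsoluteValue M ℝ :=
  Sum.elim (fun σ => place σ.toRingHom) (fun τ => place τ.toRingHom)

variable {p}

theorem norm_algebraMap_padicAlgCl (x : ℚ) :
    ‖algebraMap ℚ (PadicAlgCl p) x‖ = ‖(x : ℚ_[p])‖ := by
  rw [← PadicAlgCl.norm_extends]
  simp

theorem placeAbove_inl_natCast (σ : M →ₐ[ℚ] ℂ) : placeAbove p (.inl σ) (p : M) = p := by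
  simp [placeAbove, place_apply]

theorem placeAbove_inr_natCast (τ : M →ₐ[ℚ] PadicAlgCl p) :
    placeAbove p (.inr τ) (p : M) = (p : ℝ)⁻¹ := by
  have := norm_algebraMap_padicAlgCl (p := p) p
  simpa [placeAbove, place_apply] using this

theorem one_le_abs_mul_padic_norm {n : ℤ} (hn : n ≠ 0) : 1 ≤ |(n : ℝ)| * ‖(n : ℚ_[p])‖ := by
  have hp : 0 < (p : ℝ) := by exact_mod_cast (Fact.out : p.Prime).pos
  have hdvd : ((p ^ padicValInt p n : ℕ) : ℤ) ∣ n := by exact_mod_cast padicValInt_dvd (p := p) n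
  have hle : (p : ℝ) ^ padicValInt p n ≤ |(n : ℝ)| := by
    exact_mod_cast Int.le_of_dvd (abs_pos.mpr hn) ((dvd_abs _ _).mpr hdvd)
  rw [Padic.norm_eq_zpow_neg_valuation (by exact_mod_cast hn), Padic.valuation_intCast, zpow_neg,
    zpow_natCast, ← div_eq_mul_inv, one_le_div (by positivity)]
  exact hle

variable [FiniteDimensional ℚ M]

theorem prod_placeAbove_natCast : ∏ i, placeAbove p i (p : M) = 1 := by
  have : CharZero M := algebraRat.charZero M
  have hp : (p : ℝ) ≠ 0 := by exact_mod_cast (Fact.out : p.Prime).ne_zero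
  simp only [Fintype.prod_sum_type, placeAbove_inl_natCast, placeAbove_inr_natCast,
    Finset.prod_const, Finset.card_univ, AlgHom.card]
  rw [← mul_pow, mul_inv_cancel₀ hp, one_pow]

theorem one_le_prod_placeAbove_of_isIntegral {x : M} (hx : IsIntegral ℤ x) (hx0 : x ≠ 0) :
    1 ≤ ∏ i, placeAbove p i x := by
  obtain ⟨n, hn0, hn⟩ := exists_intCast_eq_norm_of_isIntegral hx hx0
  have harch : ∏ σ : M →ₐ[ℚ] ℂ, placeAbove p (.inl σ) x = |(n : ℝ)| :=
    (prod_norm_algHom_eq_norm_algebraMap_norm x).trans (by simp [← hn])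
  have hpadic : ∏ τ : M →ₐ[ℚ] PadicAlgCl p, placeAbove p (.inr τ) x = ‖(n : ℚ_[p])‖ :=
    (prod_norm_algHom_eq_norm_algebraMap_norm x).trans
      (by rw [norm_algebraMap_padicAlgCl, ← hn, Rat.cast_intCast])
  rw [Fintype.prod_sum_type, harch, hpadic]
  exact one_le_abs_mul_padic_norm hn0

theorem one_le_prod_placeAbove_of_mem_pIntegers {x : M} (hx : x ∈ pIntegers p M) (hx0 : x ≠ 0) :
    1 ≤ ∏ i, placeAbove p i x := by
  have : CharZero M := algebraRat.charZero M
  obtain ⟨k, hk⟩ := hx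
  have hp : (p : M) ^ k ≠ 0 := pow_ne_zero k (by exact_mod_cast (Fact.out : p.Prime).ne_zero)
  calc 1 ≤ ∏ i, placeAbove p i ((p : M) ^ k * x) :=
        one_le_prod_placeAbove_of_isIntegral hk (mul_ne_zero hp hx0)
    _ = ∏ i, placeAbove p i x := by
      simp only [map_mul, map_pow, Finset.prod_mul_distrib, Finset.prod_pow,
        prod_placeAbove_natCast, one_pow, one_mul]

end Places

section UnitEquation

variable {p : ℕ} [Fact p.Prime] {M : Type*} [Field M] [Algebra ℚ M] [FiniteDimensional ℚ M]

theorem sum_log_placeAbove_eq_zero {u w : M} {n : ℤ} (hu : u ∈ pIntegers p M)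
    (hw : w ∈ pIntegers p M) (huw : u * w = (p : M) ^ n) :
    ∑ i, Real.log (placeAbove p i u) = 0 := by
  have : CharZero M := algebraRat.charZero M
  have hp : (p : M) ≠ 0 := by exact_mod_cast (Fact.out : p.Prime).ne_zero
  have huw0 : u * w ≠ 0 := huw ▸ zpow_ne_zero n hp
  have hu0 : u ≠ 0 := left_ne_zero_of_mul huw0
  have hu1 := one_le_prod_placeAbove_of_mem_pIntegers hu hu0
  have hw1 := one_le_prod_placeAbove_of_mem_pIntegers hw (right_ne_zero_of_mul huw0)
  have hmul : (∏ i, placeAbove p i u) * ∏ i, placeAbove p i w = 1 := by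
    simp only [← Finset.prod_mul_distrib, ← map_mul, huw, map_zpow₀, Finset.prod_zpow,
      prod_placeAbove_natCast, one_zpow]
  have hprod : ∏ i, placeAbove p i u = 1 := by nlinarith
  rw [← Real.log_prod fun i _ => (AbsoluteValue.ne_zero_iff _).mpr hu0, hprod, Real.log_one]

theorem isAlmostUnitTriple_of_mul_eq_zpow {e f : M} {m n : ℤ} (he : e ∈ pIntegers p M)
    (hf : f ∈ pIntegers p M) (hef : e * f = (p : M) ^ n)
    (hef1 : (1 + e) * (1 + f) = (p : M) ^ m) :
    IsAlmostUnitTriple (pIntegers p M) (placeAbove p) 0 ![e, 1, -(1 + e)] := by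
  have : CharZero M := algebraRat.charZero M
  have hp : (p : M) ≠ 0 := by exact_mod_cast (Fact.out : p.Prime).ne_zero
  have he0 : e ≠ 0 := left_ne_zero_of_mul (hef ▸ zpow_ne_zero n hp)
  have he10 : 1 + e ≠ 0 := left_ne_zero_of_mul (hef1 ▸ zpow_ne_zero m hp)
  have he1 := add_mem (one_mem (pIntegers p M)) he
  have hf1 := add_mem (one_mem (pIntegers p M)) hf
  refine ⟨?_, ?_, ?_, fun i => ?_, ?_⟩
  · exact Fin.forall_fin_succ.mpr ⟨he, Fin.forall_fin_two.mpr ⟨one_mem _, neg_mem he1⟩⟩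
  · exact Fin.forall_fin_succ.mpr ⟨he0, Fin.forall_fin_two.mpr ⟨one_ne_zero, neg_ne_zero.mpr he10⟩⟩
  · simp only [Matrix.cons_val]
    ring
  · simpa using log_abv_le_logSup (placeAbove p i) ![e, 1, -(1 + e)] 1
  · simp only [Fin.sum_univ_three, Matrix.cons_val, AbsoluteValue.map_neg, map_one, Real.log_one,
      add_zero, Finset.sum_add_distrib, sum_log_placeAbove_eq_zero he hf hef,
      sum_log_placeAbove_eq_zero he1 hf1 hef1, zero_mul, le_refl]

theorem abs_mul_log_le_of_forall_log_placeAbove_le {n : ℤ} {B : ℝ}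
    (hB : ∀ i, Real.log (placeAbove p i ((p : M) ^ n)) ≤ B) : |(n : ℝ)| * Real.log p ≤ B := by
  have : Algebra.IsAlgebraic ℚ M := .of_finite ℚ M
  obtain ⟨σ⟩ : Nonempty (M →ₐ[ℚ] ℂ) := ⟨IsAlgClosed.lift⟩
  obtain ⟨τ⟩ : Nonempty (M →ₐ[ℚ] PadicAlgCl p) := ⟨IsAlgClosed.lift⟩
  have hσ := hB (.inl σ)
  have hτ := hB (.inr τ)
  rw [map_zpow₀, placeAbove_inl_natCast, Real.log_zpow] at hσ
  rw [map_zpow₀, placeAbove_inr_natCast, Real.log_zpow, Real.log_inv] at hτ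
  rcases abs_cases (n : ℝ) with h | h <;> rw [h.1] <;> linarith

theorem log_abv_mul_le_logHeight_add {K ι : Type*} [Field K] [Fintype ι]
    {v : ι → AbsoluteValue K ℝ} {a b : Fin 3 → K} (ha : ∀ i, 0 ≤ logSup (v i) a)
    (hb : ∀ i, 0 ≤ logSup (v i) b) (j : Fin 3) (hja : a j ≠ 0) (hjb : b j ≠ 0) (i : ι) :
    Real.log (v i (a j * b j)) ≤ logHeight v a + logHeight v b := by
  rw [map_mul, Real.log_mul ((v i).ne_zero hja) ((v i).ne_zero hjb)]
  exact add_le_add ((log_abv_le_logSup _ a j).trans (logSup_le_logHeight ha i))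
    ((log_abv_le_logSup _ b j).trans (logSup_le_logHeight hb i))

variable (p M) in
theorem exists_abs_exponent_le_of_mul_eq_zpow :
    ∃ B : ℝ, ∀ (e f : M) (m n : ℤ), e ∈ pIntegers p M → f ∈ pIntegers p M →
      e * f = (p : M) ^ n → (1 + e) * (1 + f) = (p : M) ^ m → |(m : ℝ)| ≤ B ∧ |(n : ℝ)| ≤ B := by
  have : CharZero M := algebraRat.charZero M
  have hlog : 0 < Real.log p := Real.log_pos (by exact_mod_cast (Fact.out : p.Prime).one_lt)
  obtain ⟨B, hB⟩ := IsAlmostUnitTriple.exists_logHeight_le (O := pIntegers p M) (v := placeAbove p)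
    (fun x hx hx0 => one_le_prod_placeAbove_of_mem_pIntegers hx hx0) (κ := 0) (by norm_num)
  refine ⟨(B + B) / Real.log p, fun e f m n he hf hef hef1 => ?_⟩
  have hue := isAlmostUnitTriple_of_mul_eq_zpow he hf hef hef1
  have huf := isAlmostUnitTriple_of_mul_eq_zpow hf he (mul_comm e f ▸ hef)
    (mul_comm (1 + e) (1 + f) ▸ hef1)
  have hmul (j : Fin 3) (i) := (log_abv_mul_le_logHeight_add hue.logSup_nonneg huf.logSup_nonneg j
    (hue.ne_zero j) (huf.ne_zero j) i).trans (add_le_add (hB _ hue) (hB _ huf))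
  constructor <;> rw [le_div_iff₀ hlog] <;>
    refine abs_mul_log_le_of_forall_log_placeAbove_le (M := M) fun i => ?_
  · simpa only [Matrix.cons_val, neg_mul_neg, hef1] using hmul 2 i
  · simpa only [Matrix.cons_val, hef] using hmul 0 i

theorem finite_setOf_abs_le (B : ℝ) : {x : ℤ × ℤ | |(x.1 : ℝ)| ≤ B ∧ |(x.2 : ℝ)| ≤ B}.Finite := by
  have hB : {n : ℤ | |(n : ℝ)| ≤ B}.Finite := by
    refine (Set.finite_Icc (-⌊B⌋) ⌊B⌋).subset fun n (hn : |(n : ℝ)| ≤ B) => abs_le.mp ?_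
    exact Int.le_floor.mpr (by exact_mod_cast hn)
  exact hB.prod hB

variable (p M) in
theorem finite_setOf_sq_eq_discriminant :
    {x : ℤ × ℤ | ∃ r : M, r ^ 2 =
      ((p : M) ^ x.1 - (p : M) ^ x.2 - 1) ^ 2 - 4 * (p : M) ^ x.2}.Finite := by
  have : CharZero M := algebraRat.charZero M
  have hp : (p : M) ≠ 0 := by exact_mod_cast (Fact.out : p.Prime).ne_zero
  obtain ⟨B, hB⟩ := exists_abs_exponent_le_of_mul_eq_zpow p M
  refine (finite_setOf_abs_le B).subset ?_
  rintro ⟨m, n⟩ ⟨r, hr⟩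
  set s : M := (p : M) ^ m - (p : M) ^ n - 1 with hs
  have hpow := natCast_zpow_mem_pIntegers hp
  have hsO : s ∈ pIntegers p M := sub_mem (sub_mem (hpow m) (hpow n)) (one_mem _)
  refine hB ((s + r) / 2) ((s - r) / 2) m n
    (mem_pIntegers_of_sq_sub_mul_add_eq_zero hsO (hpow n) ?_)
    (mem_pIntegers_of_sq_sub_mul_add_eq_zero hsO (hpow n) ?_) ?_ ?_
  · linear_combination hr / 4
  · linear_combination hr / 4
  · linear_combination -hr / 4
  · linear_combination -hr / 4 + hs

variable (p M) in
theorem finite_setOf_sq_eq_const_mul_discriminant {c : M} (hc : c ≠ 0) :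
    {x : ℤ × ℤ | ∃ r : M, r ^ 2 =
      c * (((p : M) ^ x.1 - (p : M) ^ x.2 - 1) ^ 2 - 4 * (p : M) ^ x.2)}.Finite := by
  let N := (Polynomial.X ^ 2 - Polynomial.C c).SplittingField
  have : FiniteDimensional ℚ N := .trans ℚ M N
  obtain ⟨d, hd⟩ : ∃ d : N, d ^ 2 = algebraMap M N c := by
    have hsplits := Polynomial.SplittingField.splits (Polynomial.X ^ 2 - Polynomial.C c)
    obtain ⟨d, hd⟩ := hsplits.exists_eval_eq_zero (by
      rw [Polynomial.degree_map, Polynomial.degree_X_pow_sub_C two_pos]; norm_num)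
    exact ⟨d, sub_eq_zero.mp (by simpa using hd)⟩
  refine (finite_setOf_sq_eq_discriminant p N).subset ?_
  rintro x ⟨r, hr⟩
  refine ⟨algebraMap M N r / d, ?_⟩
  rw [div_pow, ← map_pow, hr, hd, map_mul, mul_div_cancel_left₀ _ (by simpa using hc)]
  simp only [map_sub, map_mul, map_pow, map_zpow₀, map_natCast, map_ofNat, map_one]

end UnitEquation

section CubicThue

open NumberField

/-- The factors of `p³ + θ³z³` over a field containing a primitive cube root of unity `ω`, scaled so
that they sum to zero. -/
def cubicFactors {M : Type*} [Field M] (ω θ : M) (p z : ℤ) : Fin 3 → M :=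
  fun j => ω ^ (j : ℕ) * (p + ω ^ (j : ℕ) * θ * z)

section Factors

variable {M : Type*} [Field M] {ω θ : M}

theorem cubicFactors_sum (hω : ω ^ 2 + ω + 1 = 0) (p z : ℤ) :
    cubicFactors ω θ p z 0 + cubicFactors ω θ p z 1 + cubicFactors ω θ p z 2 = 0 := by
  simp only [cubicFactors, Fin.val_zero, Fin.val_one, Fin.val_two]
  linear_combination ((p : M) + θ * z * (ω ^ 2 - ω + 1)) * hω

theorem prod_cubicFactors (hω : ω ^ 2 + ω + 1 = 0) (p z : ℤ) :
    ∏ j, cubicFactors ω θ p z j = (p : M) ^ 3 + θ ^ 3 * z ^ 3 := by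
  have hω3 : ω ^ 3 = 1 := by linear_combination (ω - 1) * hω
  have hfactor : (p + θ * z) * (p + ω * θ * z) * (p + ω ^ 2 * θ * z) =
      (p : M) ^ 3 + θ ^ 3 * z ^ 3 := by
    linear_combination θ ^ 3 * (z : M) ^ 3 * hω3 + (p ^ 2 * θ * z + p * θ ^ 2 * z ^ 2 * ω) * hω
  simp only [cubicFactors, Fin.prod_univ_three, Fin.val_zero, Fin.val_one, Fin.val_two]
  linear_combination ω ^ 3 * hfactor + ((p : M) ^ 3 + θ ^ 3 * z ^ 3) * hω3

theorem three_mul_eq_cubicFactors_combination (hω : ω ^ 2 + ω + 1 = 0) (p z : ℤ) :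
    3 * (p : M) = cubicFactors ω θ p z 0 + ω ^ 2 * cubicFactors ω θ p z 1 +
      ω * cubicFactors ω θ p z 2 := by
  simp only [cubicFactors, Fin.val_zero, Fin.val_one, Fin.val_two]
  linear_combination (-(p : M) * 2 * (ω - 1) - θ * z * (1 + (ω + ω ^ 2) * (ω - 1))) * hω

theorem isIntegral_cubicFactors {D : ℤ} (hω : ω ^ 2 + ω + 1 = 0) (hθ : θ ^ 3 = D) (p z : ℤ)
    (j : Fin 3) : IsIntegral ℤ (cubicFactors ω θ p z j) := by
  have hω3 : ω ^ 3 = 1 := by linear_combination (ω - 1) * hω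
  have hωI : IsIntegral ℤ ω := .of_pow three_pos (hω3 ▸ isIntegral_one)
  have hθI : IsIntegral ℤ θ := .of_pow three_pos (hθ ▸ isIntegral_intCast D)
  exact (hωI.pow _).mul
    ((isIntegral_intCast p).add (((hωI.pow _).mul hθI).mul (isIntegral_intCast z)))

end Factors

section Places

variable {M : Type*} [Field M] [Algebra ℚ M] {ω θ : M} {D : ℤ}

theorem place_intCast (σ : M →ₐ[ℚ] ℂ) (n : ℤ) : place σ.toRingHom (n : M) = |(n : ℝ)| := by
  simp [place_apply]

theorem log_abs_le_logSup_cubicFactors (σ : M →ₐ[ℚ] ℂ) (hω : ω ^ 2 + ω + 1 = 0) {p z : ℤ}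
    (hp : p ≠ 0) (hne : ∀ j, cubicFactors ω θ p z j ≠ 0) :
    Real.log |(p : ℝ)| ≤ logSup (place σ.toRingHom) (cubicFactors ω θ p z) := by
  set v := place σ.toRingHom
  set a := cubicFactors ω θ p z
  have hvω : v ω = 1 := by
    have hω3 : ω ^ 3 = 1 := by linear_combination (ω - 1) * hω
    exact (pow_eq_one_iff_of_nonneg (v.nonneg _) three_ne_zero).mp
      (by rw [← map_pow, hω3, map_one])
  have hva (j : Fin 3) : v (a j) ≤ Real.exp (logSup v a) :=
    (Real.log_le_iff_le_exp (v.pos (hne j))).mp (log_abv_le_logSup v a j)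
  have hv3p : v (3 * p) = 3 * |(p : ℝ)| := by
    rw [← Int.cast_ofNat, ← Int.cast_mul, place_intCast]
    simp [abs_mul]
  have hadd : 3 * |(p : ℝ)| ≤ v (a 0) + v (a 1) + v (a 2) := by
    calc 3 * |(p : ℝ)| = v (a 0 + ω ^ 2 * a 1 + ω * a 2) := by
          rw [← hv3p, three_mul_eq_cubicFactors_combination hω p z]
      _ ≤ v (a 0) + v (ω ^ 2 * a 1) + v (ω * a 2) :=
          (v.add_le _ _).trans (add_le_add_left (v.add_le _ _) _)
      _ = v (a 0) + v (a 1) + v (a 2) := by simp only [map_mul, map_pow, hvω, one_pow, one_mul]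
  rw [Real.log_le_iff_le_exp (by simpa using hp)]
  linarith [hva 0, hva 1, hva 2]

theorem sum_log_place_cubicFactors (σ : M →ₐ[ℚ] ℂ) (hω : ω ^ 2 + ω + 1 = 0) (hθ : θ ^ 3 = D)
    {p z : ℤ} (hne : ∀ j, cubicFactors ω θ p z j ≠ 0) :
    ∑ j, Real.log (place σ.toRingHom (cubicFactors ω θ p z j)) =
      Real.log |((p ^ 3 + D * z ^ 3 : ℤ) : ℝ)| := by
  rw [← Real.log_prod fun j _ => (AbsoluteValue.ne_zero_iff _).mpr (hne j), ← map_prod,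
    prod_cubicFactors hω, hθ, ← place_intCast σ]
  push_cast
  rfl

variable [FiniteDimensional ℚ M]

theorem isAlmostUnitTriple_cubicFactors (hω : ω ^ 2 + ω + 1 = 0) (hθ : θ ^ 3 = D) {κ : ℝ}
    (hκ : 0 ≤ κ) {p z : ℤ} (hp : p ≠ 0) (hpz : p ^ 3 + D * z ^ 3 ≠ 0)
    (hlog : Real.log |((p ^ 3 + D * z ^ 3 : ℤ) : ℝ)| ≤ κ * Real.log |(p : ℝ)|) :
    IsAlmostUnitTriple (integralClosure ℤ M).toSubring
      (fun σ : M →ₐ[ℚ] ℂ => place σ.toRingHom) κ (cubicFactors ω θ p z) := by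
  have : CharZero M := algebraRat.charZero M
  have hne : ∀ j, cubicFactors ω θ p z j ≠ 0 := by
    have hprod : ∏ j, cubicFactors ω θ p z j ≠ 0 := by
      rw [prod_cubicFactors hω, hθ]
      exact_mod_cast hpz
    exact fun j => Finset.prod_ne_zero_iff.mp hprod j (Finset.mem_univ j)
  have hlogSup (σ : M →ₐ[ℚ] ℂ) := log_abs_le_logSup_cubicFactors σ hω hp hne
  refine ⟨isIntegral_cubicFactors hω hθ p z, hne, cubicFactors_sum hω p z, fun σ => ?_, ?_⟩
  · exact (Real.log_nonneg (by exact_mod_cast Int.one_le_abs hp)).trans (hlogSup σ)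
  · rw [logHeight, Finset.mul_sum]
    refine Finset.sum_le_sum fun σ _ => ?_
    rw [sum_log_place_cubicFactors σ hω hθ hne]
    exact hlog.trans (mul_le_mul_of_nonneg_left (hlogSup σ) hκ)

end Places

theorem exists_algebraic_cubeRoots (D : ℤ) :
    ∃ (M : IntermediateField ℚ ℂ) (ω θ : M), FiniteDimensional ℚ M ∧ ω ^ 2 + ω + 1 = 0 ∧
      θ ^ 3 = D := by
  obtain ⟨θ, hθ⟩ := IsAlgClosed.exists_pow_nat_eq (D : ℂ) three_pos
  have hζ := Complex.isPrimitiveRoot_exp 3 three_ne_zero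
  set ω := Complex.exp (2 * Real.pi * Complex.I / (3 : ℕ))
  have hω : ω ^ 2 + ω + 1 = 0 := by
    have := hζ.geom_sum_eq_zero (by norm_num)
    rw [Finset.sum_range_succ, Finset.sum_range_succ, Finset.sum_range_one] at this
    linear_combination this
  have hωI : IsIntegral ℚ ω := .of_pow three_pos (hζ.pow_eq_one ▸ isIntegral_one)
  have hθI : IsIntegral ℚ θ := .of_pow three_pos (hθ ▸ isIntegral_intCast D)
  let M := IntermediateField.adjoin ℚ {ω, θ}
  refine ⟨M, ⟨ω, IntermediateField.subset_adjoin _ _ (by simp)⟩,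
    ⟨θ, IntermediateField.subset_adjoin _ _ (by simp)⟩, ?_, ?_, ?_⟩
  · exact IntermediateField.finiteDimensional_adjoin (by simp [hωI, hθI])
  · exact Subtype.ext hω
  · exact Subtype.ext hθ

theorem exists_log_abs_le_of_log_abs_cube_add_le (D : ℤ) {κ : ℝ} (hκ0 : 0 ≤ κ) (hκ : κ < 1 / 2) :
    ∃ B : ℝ, ∀ p z : ℤ, p ≠ 0 → p ^ 3 + D * z ^ 3 ≠ 0 →
      Real.log |((p ^ 3 + D * z ^ 3 : ℤ) : ℝ)| ≤ κ * Real.log |(p : ℝ)| →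
      Real.log |(p : ℝ)| ≤ B := by
  obtain ⟨M, ω, θ, _, hω, hθ⟩ := exists_algebraic_cubeRoots D
  obtain ⟨B, hB⟩ := IsAlmostUnitTriple.exists_logHeight_le (O := (integralClosure ℤ M).toSubring)
    (v := fun σ : M →ₐ[ℚ] ℂ => place σ.toRingHom)
    (fun x hx hx0 => one_le_prod_place_of_isIntegral hx hx0) hκ
  refine ⟨B, fun p z hp hpz hlog => ?_⟩
  have htriple := isAlmostUnitTriple_cubicFactors hω hθ hκ0 hp hpz hlog
  calc Real.log |(p : ℝ)|
      ≤ logSup (place M.val.toRingHom) (cubicFactors ω θ p z) :=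
        log_abs_le_logSup_cubicFactors M.val hω hp htriple.ne_zero
    _ ≤ logHeight _ _ := logSup_le_logHeight htriple.logSup_nonneg M.val
    _ ≤ B := hB _ htriple

theorem exists_abs_le_of_abs_cube_add_le (D : ℤ) (C : ℝ) {κ : ℝ} (hκ : κ < 1 / 2) :
    ∃ B : ℝ, ∀ p z : ℤ, p ^ 3 + D * z ^ 3 ≠ 0 →
      |((p ^ 3 + D * z ^ 3 : ℤ) : ℝ)| ≤ C * |(p : ℝ)| ^ κ → |(p : ℝ)| ≤ B := by
  obtain ⟨ε, hε, hε'⟩ := exists_between (max_lt hκ (by norm_num : (0 : ℝ) < 1 / 2))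
  obtain ⟨hκε, hε0⟩ := max_lt_iff.mp hε
  obtain ⟨B, hB⟩ := exists_log_abs_le_of_log_abs_cube_add_le D hε0.le hε'
  refine ⟨Real.exp (max B (Real.log C / (ε - κ))), fun p z hpz hle => ?_⟩
  obtain rfl | hp := eq_or_ne p 0
  · simpa using (Real.exp_pos _).le
  have hp' : 0 < |(p : ℝ)| := by simpa using hp
  have hpz' : 1 ≤ |((p ^ 3 + D * z ^ 3 : ℤ) : ℝ)| := by exact_mod_cast Int.one_le_abs hpz
  have hC : 0 < C := pos_of_mul_pos_left (zero_lt_one.trans_le (hpz'.trans hle)) (by positivity)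
  have hlog : Real.log |((p ^ 3 + D * z ^ 3 : ℤ) : ℝ)| ≤ Real.log C + κ * Real.log |(p : ℝ)| := by
    rw [← Real.log_rpow hp', ← Real.log_mul hC.ne' (by positivity)]
    exact Real.log_le_log (by linarith) hle
  rw [← Real.log_le_iff_le_exp hp', le_max_iff, le_div_iff₀ (sub_pos.mpr hκε)]
  by_contra! hlt
  exact hlt.1.not_ge (hB p z hp hpz (by linarith [hlt.2]))

end CubicThue

section Eisenstein

open NumberField IsCyclotomicExtension.Rat

section

variable {K : Type*} [Field K] {ζ : K} (hζ : IsPrimitiveRoot ζ 3)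

theorem toInteger_sq_add_toInteger_add_one : hζ.toInteger ^ 2 + hζ.toInteger + 1 = 0 := by
  have := hζ.toInteger_isPrimitiveRoot.geom_sum_eq_zero (by norm_num)
  rw [Finset.sum_range_succ, Finset.sum_range_succ, Finset.sum_range_one] at this
  linear_combination this

theorem eq_zero_and_eq_zero_of_intCast_add_mul_toInteger_eq_zero [CharZero K] {r s : ℤ}
    (h : (r : 𝓞 K) + s * hζ.toInteger = 0) : r = 0 ∧ s = 0 := by
  have hη := toInteger_sq_add_toInteger_add_one hζ
  have hnorm : ((r ^ 2 - r * s + s ^ 2 : ℤ) : 𝓞 K) = 0 := by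
    push_cast
    linear_combination ((r : 𝓞 K) + s * hζ.toInteger ^ 2) * h -
      (r * s + s ^ 2 * (hζ.toInteger - 1)) * hη
  have hnorm' : r ^ 2 - r * s + s ^ 2 = 0 := by exact_mod_cast hnorm
  constructor <;> refine pow_eq_zero_iff two_ne_zero |>.mp ?_ <;>
    nlinarith [sq_nonneg (r - s), sq_nonneg r, sq_nonneg s]

theorem intCast_add_mul_toInteger_inj [CharZero K] {r s r' s' : ℤ}
    (h : (r : 𝓞 K) + s * hζ.toInteger = r' + s' * hζ.toInteger) : r = r' ∧ s = s' := by
  have := eq_zero_and_eq_zero_of_intCast_add_mul_toInteger_eq_zero hζ (r := r - r') (s := s - s')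
    (by push_cast; linear_combination h)
  omega

theorem isCoprime_intCast_add_mul_toInteger {a b : ℤ} (hab : IsCoprime a b) (hb : 3 ∣ b) :
    IsCoprime ((a : 𝓞 K) + b * hζ.toInteger) (a + b * hζ.toInteger ^ 2) := by
  have hη := toInteger_sq_add_toInteger_add_one hζ
  have hnorm : IsCoprime (a ^ 2 - a * b + b ^ 2) (3 * b) := by
    have h : IsCoprime (a ^ 2 - a * b + b ^ 2) b := by
      rw [show a ^ 2 - a * b + b ^ 2 = a ^ 2 + b * (b - a) by ring]
      exact hab.pow_left.add_mul_left_left _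
    exact (h.of_isCoprime_of_dvd_right hb).mul_right h
  obtain ⟨x, y, hxy⟩ := hnorm
  have hxy' : (x : 𝓞 K) * (a ^ 2 - a * b + b ^ 2) + y * (3 * b) = 1 := by
    simpa using congrArg (Int.cast : ℤ → 𝓞 K) hxy
  set η := hζ.toInteger
  refine ⟨x * (a + b * η ^ 2) - y * (1 + 2 * η), y * (1 + 2 * η), ?_⟩
  linear_combination hxy' + (x * (a * b + b ^ 2 * (η - 1)) + y * b * (2 * η - 3)) * hη

variable [NumberField K] [IsCyclotomicExtension {3} ℚ K]

theorem exists_eq_intCast_add_mul_toInteger (x : 𝓞 K) :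
    ∃ r s : ℤ, x = r + s * hζ.toInteger := by
  obtain ⟨f, hf, rfl⟩ := hζ.integralPowerBasis.exists_eq_aeval x
  rw [hζ.integralPowerBasis_dim, Nat.totient_prime Nat.prime_three] at hf
  obtain ⟨s, r, rfl⟩ := Polynomial.exists_eq_X_add_C_of_natDegree_le_one (p := f) (by omega)
  exact ⟨r, s, by
    rw [map_add, map_mul, Polynomial.aeval_C, Polynomial.aeval_C, Polynomial.aeval_X,
      hζ.integralPowerBasis_gen, algebraMap_int_eq, eq_intCast, eq_intCast, add_comm]⟩

theorem not_three_dvd_intCast_add_mul_toInteger {a b : ℤ} (hab : IsCoprime a b) (hb : 3 ∣ b) :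
    ¬ (3 : 𝓞 K) ∣ a + b * hζ.toInteger := by
  rintro ⟨x, hx⟩
  obtain ⟨r, s, rfl⟩ := exists_eq_intCast_add_mul_toInteger hζ x
  have ha : a = 3 * r := (intCast_add_mul_toInteger_inj hζ (r := a) (s := b) (r' := 3 * r)
    (s' := 3 * s) (by push_cast; linear_combination hx)).1
  exact Int.prime_three.not_isUnit (hab.isUnit_of_dvd' ⟨r, ha⟩ hb)

/- By Kummer's lemma, since modulo `3` both `a + bη` and all cubes are rational integers. -/
theorem eq_one_or_neg_one_of_intCast_add_mul_toInteger_eq_cube_mul {a b : ℤ}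
    (hab : IsCoprime a b) (hb : 3 ∣ b) {d : 𝓞 K} {u : (𝓞 K)ˣ}
    (h : d ^ 3 * u = (a : 𝓞 K) + b * hζ.toInteger) : u = 1 ∨ u = -1 := by
  have hη := toInteger_sq_add_toInteger_add_one hζ
  have hndvd := not_three_dvd_intCast_add_mul_toInteger hζ hab hb
  set η := hζ.toInteger
  obtain ⟨b, rfl⟩ := hb
  obtain ⟨r, s, rfl⟩ := exists_eq_intCast_add_mul_toInteger hζ d
  have hcube : ((r : 𝓞 K) + s * η) ^ 3 =
      ((r ^ 3 + s ^ 3 : ℤ) : 𝓞 K) + 3 * (r ^ 2 * s * η + r * s ^ 2 * η ^ 2) := by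
    push_cast
    linear_combination (s : 𝓞 K) ^ 3 * (η - 1) * hη
  have h3 : ¬ 3 ∣ r ^ 3 + s ^ 3 := by
    rintro ⟨m, hm⟩
    refine hndvd (h ▸ Dvd.dvd.mul_right ?_ _)
    rw [hcube, hm, Int.cast_mul, Int.cast_ofNat]
    exact dvd_add (dvd_mul_right _ _) (dvd_mul_right _ _)
  obtain ⟨x, y, hxy⟩ := (Int.prime_three.coprime_iff_not_dvd.mpr h3)
  have hxy' : (x : 𝓞 K) * 3 + y * ((r ^ 3 + s ^ 3 : ℤ) : 𝓞 K) = 1 := by exact_mod_cast hxy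
  have h3dvd : (η - 1) ^ 2 ∣ (3 : 𝓞 K) :=
    ⟨-η ^ 2, by linear_combination (η ^ 2 - 3 * η + 3) * hη⟩
  refine Three.eq_one_or_neg_one_of_unit_of_congruent hζ u
    ⟨y * a, h3dvd.trans ⟨x * u - y * u * (r ^ 2 * s * η + r * s ^ 2 * η ^ 2) + y * b * η, ?_⟩⟩
  push_cast at h hxy' hcube ⊢
  linear_combination -(u : 𝓞 K) * hxy' + y * h - y * u * hcube

theorem exists_cube_eq_intCast_add_mul_toInteger {a b ν : ℤ} (hab : IsCoprime a b) (hb : 3 ∣ b)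
    (h : a ^ 2 - a * b + b ^ 2 = ν ^ 3) :
    ∃ d : 𝓞 K, (a : 𝓞 K) + b * hζ.toInteger = d ^ 3 := by
  have : IsPrincipalIdealRing (𝓞 K) := three_pid K
  have hη := toInteger_sq_add_toInteger_add_one hζ
  have hmul : ((a : 𝓞 K) + b * hζ.toInteger) * (a + b * hζ.toInteger ^ 2) = ν ^ 3 := by
    rw [← Int.cast_pow, ← h]
    push_cast
    linear_combination ((a : 𝓞 K) * b + b ^ 2 * (hζ.toInteger - 1)) * hη
  obtain ⟨d, u, hd⟩ := exists_associated_pow_of_mul_eq_pow'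
    (isCoprime_intCast_add_mul_toInteger hζ hab hb) hmul
  obtain rfl | rfl := eq_one_or_neg_one_of_intCast_add_mul_toInteger_eq_cube_mul hζ hab hb hd
  · exact ⟨d, by simpa using hd.symm⟩
  · exact ⟨-d, by rw [← hd]; push_cast; ring⟩

end

theorem exists_isCoprime_eq_of_sq_sub_mul_add_sq_eq_cube {a b ν : ℤ} (hab : IsCoprime a b)
    (hb : 3 ∣ b) (h : a ^ 2 - a * b + b ^ 2 = ν ^ 3) :
    ∃ r s : ℤ, IsCoprime r s ∧ b = 3 * (r * s * (r - s)) ∧ ν = r ^ 2 - r * s + s ^ 2 := by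
  let K := CyclotomicField 3 ℚ
  have : IsCyclotomicExtension {3} ℚ K := by
    convert CyclotomicField.isCyclotomicExtension 3 ℚ
    · rfl
    · exact Subsingleton.elim _ _
  have : NumberField K := IsCyclotomicExtension.numberField {3} ℚ K
  have hζ := IsCyclotomicExtension.zeta_spec 3 ℚ K
  have hη := toInteger_sq_add_toInteger_add_one hζ
  obtain ⟨d, hd⟩ := exists_cube_eq_intCast_add_mul_toInteger hζ hab hb h
  obtain ⟨r, s, rfl⟩ := exists_eq_intCast_add_mul_toInteger hζ d
  obtain ⟨ha, hb'⟩ := intCast_add_mul_toInteger_inj hζ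
    (r' := r ^ 3 + s ^ 3 - 3 * r * s ^ 2) (s' := 3 * (r * s * (r - s))) (by
      rw [hd]
      push_cast
      linear_combination (3 * r * s ^ 2 + s ^ 3 * (hζ.toInteger - 1)) * hη)
  refine ⟨r, s, ?_, hb', ?_⟩
  · obtain ⟨x, y, hxy⟩ := hab
    exact ⟨x * (r ^ 2 - 3 * s ^ 2) + 3 * y * s * (r - s), x * s ^ 2, by
      linear_combination hxy - x * ha - y * hb'⟩
  · refine (Odd.strictMono_pow (by decide : Odd 3)).injective ?_
    rw [← h, ha, hb']
    ring

end Eisenstein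

section Descent

theorem exists_eq_cube_of_isCoprime_of_mul_eq_cube {x y z : ℤ} (hxy : IsCoprime x y)
    (h : x * y = z ^ 3) : ∃ g, x = g ^ 3 :=
  (Int.eq_pow_of_mul_eq_pow_odd hxy (by decide) h).1

theorem isCoprime_add_self_right {x y : ℤ} (h : IsCoprime x y) : IsCoprime x (x + y) := by
  simpa only [mul_one, add_comm] using h.add_mul_left_right 1

theorem isCoprime_three_iff_not_three_dvd {x : ℤ} : IsCoprime 3 x ↔ ¬ 3 ∣ x :=
  Int.prime_three.coprime_iff_not_dvd

theorem not_three_dvd_mul_of_three_dvd_add {x y : ℤ} (hxy : IsCoprime x y) (h : 3 ∣ x + y) :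
    ¬ 3 ∣ x * y := by
  have hadd : IsCoprime (x * y) (x + y) :=
    (isCoprime_add_self_right hxy).mul_left
      (add_comm x y ▸ isCoprime_add_self_right hxy.symm)
  exact fun hmul => Int.prime_three.not_isUnit (hadd.isUnit_of_dvd' hmul h)

theorem three_dvd_add_of_three_dvd_cube_add_cube {x y : ℤ} (h : 3 ∣ x ^ 3 + y ^ 3) : 3 ∣ x + y := by
  refine Int.prime_three.dvd_of_dvd_pow (n := 3) ?_
  rw [show (x + y) ^ 3 = x ^ 3 + y ^ 3 + 3 * (x * y * (x + y)) by ring]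
  exact dvd_add h (dvd_mul_right _ _)

theorem three_pow_dvd_add_of_three_pow_succ_dvd_cube_add_cube {k : ℕ} {x y : ℤ}
    (hxy : IsCoprime x y) (h : 3 ^ (k + 1) ∣ x ^ 3 + y ^ 3) : 3 ^ k ∣ x + y := by
  have hadd : 3 ∣ x + y :=
    three_dvd_add_of_three_dvd_cube_add_cube ((dvd_pow_self 3 k.succ_ne_zero).trans h)
  have hmul := not_three_dvd_mul_of_three_dvd_add hxy hadd
  obtain ⟨l, hl⟩ := hadd
  have hcoprime : IsCoprime (3 ^ k) (3 * l ^ 2 - x * y) :=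
    (isCoprime_three_iff_not_three_dvd.mpr (by omega)).pow_left
  refine hcoprime.dvd_of_dvd_mul_right ?_
  rw [pow_succ', show x ^ 3 + y ^ 3 = 3 * ((x + y) * (3 * l ^ 2 - x * y)) by
    linear_combination (x + y) * (x + y + 3 * l) * hl] at h
  exact Int.dvd_of_mul_dvd_mul_left three_ne_zero h

theorem exists_eq_cubes_of_mul_mul_add_eq {k : ℕ} {u w μ : ℤ} (huw : IsCoprime u w)
    (h3 : 3 ∣ u + w) (h : u * w * (u + w) = 3 ^ k * μ ^ 3) :
    3 ^ k ∣ u + w ∧ ∃ g e : ℤ, u = g ^ 3 ∧ w = e ^ 3 := by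
  have hdvd : 3 ^ k ∣ u + w :=
    (isCoprime_three_iff_not_three_dvd.mpr
      (not_three_dvd_mul_of_three_dvd_add huw h3)).pow_left.dvd_of_dvd_mul_left ⟨μ ^ 3, h⟩
  obtain ⟨x, hx⟩ := hdvd
  have hμ : u * w * x = μ ^ 3 :=
    mul_left_cancel₀ (pow_ne_zero k three_ne_zero) (by rw [← h, hx]; ring)
  have hux : IsCoprime u x := (isCoprime_add_self_right huw).of_isCoprime_of_dvd_right
    ⟨3 ^ k, by rw [hx, mul_comm]⟩
  have hwx : IsCoprime w x := (isCoprime_add_self_right huw.symm).of_isCoprime_of_dvd_right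
    ⟨3 ^ k, by rw [add_comm, hx, mul_comm]⟩
  obtain ⟨g, hg⟩ := exists_eq_cube_of_isCoprime_of_mul_eq_cube (huw.mul_right hux)
    (by rw [← hμ, mul_assoc] : u * (w * x) = μ ^ 3)
  obtain ⟨e, he⟩ := exists_eq_cube_of_isCoprime_of_mul_eq_cube (huw.symm.mul_right hwx)
    (by rw [← hμ]; ring : w * (u * x) = μ ^ 3)
  exact ⟨⟨x, hx⟩, g, e, hg, he⟩

theorem three_pow_le_of_mul_mul_add_eq {k : ℕ} {u w μ : ℤ} (huw : IsCoprime u w)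
    (h3 : 3 ∣ u + w) (h0 : u + w ≠ 0) (h : u * w * (u + w) = 3 ^ (k + 1) * μ ^ 3) :
    3 ^ (6 * k) ≤ 64 * (u ^ 2 + u * w + w ^ 2) := by
  obtain ⟨hdvd, g, e, rfl, rfl⟩ := exists_eq_cubes_of_mul_mul_add_eq huw h3 h
  have hge : IsCoprime g e := (IsCoprime.pow_iff three_pos three_pos).mp huw
  have hge0 : g + e ≠ 0 := fun hge0 => h0 (by
    linear_combination (g ^ 2 - g * e + e ^ 2) * hge0)
  have habs : (3 : ℤ) ^ k ≤ |g + e| := Int.le_of_dvd (abs_pos.mpr hge0)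
    ((dvd_abs _ _).mpr (three_pow_dvd_add_of_three_pow_succ_dvd_cube_add_cube hge hdvd))
  calc (3 : ℤ) ^ (6 * k) = (3 ^ k) ^ 6 := by rw [mul_comm, pow_mul]
    _ ≤ |g + e| ^ 6 := pow_le_pow_left₀ (by positivity) habs 6
    _ = (g + e) ^ 6 := Even.pow_abs (by decide) _
    _ ≤ 32 * (g ^ 6 + e ^ 6) := Even.add_pow_le (n := 6) (by decide)
    _ ≤ 64 * ((g ^ 3) ^ 2 + g ^ 3 * e ^ 3 + (e ^ 3) ^ 2) := by
      linarith [sq_nonneg (g ^ 3 + e ^ 3)]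

theorem three_pow_le_of_mul_mul_sub_eq {k : ℕ} {r s μ : ℤ} (hrs : IsCoprime r s)
    (h0 : r * s * (r - s) ≠ 0) (h : r * s * (r - s) = 3 ^ (k + 1) * μ ^ 3) :
    3 ^ (6 * k) ≤ 64 * (r ^ 2 - r * s + s ^ 2) := by
  have h3 : 3 ∣ r * s * (r - s) := h ▸ (dvd_pow_self 3 k.succ_ne_zero).mul_right _
  have hsub : IsCoprime r (r - s) := by
    simpa only [sub_eq_add_neg] using isCoprime_add_self_right hrs.neg_right
  have hsub' : IsCoprime s (s - r) := by
    simpa only [sub_eq_add_neg] using isCoprime_add_self_right hrs.symm.neg_right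
  rcases Int.prime_three.dvd_or_dvd h3 with h3 | h3
  · rcases Int.prime_three.dvd_or_dvd h3 with h3 | h3
    · have := three_pow_le_of_mul_mul_add_eq (u := s) (w := r - s) (μ := μ) (k := k)
        (by simpa using hsub'.neg_right) (by simpa using h3)
        (by simpa using left_ne_zero_of_mul (left_ne_zero_of_mul h0)) (by rw [← h]; ring)
      linarith
    · have := three_pow_le_of_mul_mul_add_eq (u := r) (w := s - r) (μ := -μ) (k := k)
        (by simpa using hsub.neg_right) (by simpa using h3)
        (by simpa using right_ne_zero_of_mul (left_ne_zero_of_mul h0)) (by linear_combination -h)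
      linarith
  · have := three_pow_le_of_mul_mul_add_eq (u := r) (w := -s) (μ := -μ) (k := k) hrs.neg_right
      h3 (right_ne_zero_of_mul h0) (by linear_combination -h)
    linarith

theorem exists_add_eq_and_sq_sub_mul_add_sq_eq {k : ℕ} {p q w : ℤ} (hpq : IsCoprime p q)
    (h : p ^ 3 + q ^ 3 = 3 ^ (k + 2) * w ^ 3) :
    ∃ μ ν : ℤ, p + q = 3 ^ (k + 1) * μ ^ 3 ∧ p ^ 2 - p * q + q ^ 2 = 3 * ν ^ 3 := by
  have h3 : 3 ∣ p + q := three_dvd_add_of_three_dvd_cube_add_cube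
    (h ▸ (dvd_pow_self 3 (k + 1).succ_ne_zero).mul_right _)
  obtain ⟨m, hm⟩ : 3 ^ (k + 1) ∣ p + q :=
    three_pow_dvd_add_of_three_pow_succ_dvd_cube_add_cube hpq ⟨w ^ 3, h⟩
  obtain ⟨b, hb⟩ := h3
  obtain ⟨n, hn⟩ : ∃ n, p ^ 2 - p * q + q ^ 2 = 3 * n :=
    ⟨3 * b ^ 2 - p * q, by linear_combination (p + q + 3 * b) * hb⟩
  have hmn : m * n = w ^ 3 := by
    refine mul_left_cancel₀ (pow_ne_zero (k + 2) three_ne_zero) ?_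
    rw [← h, pow_succ]
    linear_combination -(3 : ℤ) * n * hm - (p + q) * hn
  have hcoprime : IsCoprime m n := by
    have hadd : IsCoprime (p + q) (p * q) :=
      (isCoprime_add_self_right hpq).symm.mul_right
        (add_comm q p ▸ isCoprime_add_self_right hpq.symm).symm
    have hadd' : IsCoprime (p + q) n := by
      have hn' : 3 * n = 3 * (-(p * q) + (p + q) * b) := by
        linear_combination (p + q) * hb - hn
      rw [mul_left_cancel₀ three_ne_zero hn']
      exact hadd.neg_right.add_mul_left_right b
    exact hadd'.of_isCoprime_of_dvd_left ⟨3 ^ (k + 1), by rw [hm, mul_comm]⟩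
  obtain ⟨μ, rfl⟩ := exists_eq_cube_of_isCoprime_of_mul_eq_cube hcoprime hmn
  obtain ⟨ν, rfl⟩ := exists_eq_cube_of_isCoprime_of_mul_eq_cube hcoprime.symm
    (mul_comm n _ ▸ hmn)
  exact ⟨μ, ν, hm, hn⟩

theorem exists_isCoprime_mul_mul_sub_eq {k : ℕ} {p q w : ℤ} (hpq : IsCoprime p q)
    (h : p ^ 3 + q ^ 3 = 3 ^ (k + 3) * w ^ 3) :
    ∃ r s μ : ℤ, IsCoprime r s ∧ r * s * (r - s) = 3 ^ k * μ ^ 3 ∧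
      p + q = 9 * (r * s * (r - s)) ∧ p ^ 2 - p * q + q ^ 2 = 3 * (r ^ 2 - r * s + s ^ 2) ^ 3 := by
  obtain ⟨μ, ν, hadd, hnorm⟩ := exists_add_eq_and_sq_sub_mul_add_sq_eq (k := k + 1) hpq h
  obtain ⟨b, hb⟩ : ∃ b, b = 3 ^ (k + 1) * μ ^ 3 := ⟨_, rfl⟩
  have hadd' : p + q = 3 * b := by rw [hadd, hb]; ring
  obtain rfl : p = 3 * b - q := by linarith
  have hcoprime : IsCoprime (2 * b - q) b := by
    have hqb : IsCoprime q b :=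
      (isCoprime_add_self_right hpq.symm).of_isCoprime_of_dvd_right ⟨3, by ring⟩
    rw [show 2 * b - q = -q + b * 2 by ring]
    exact hqb.neg_left.add_mul_left_left 2
  obtain ⟨r, s, hrs, hbrs, rfl⟩ := exists_isCoprime_eq_of_sq_sub_mul_add_sq_eq_cube hcoprime
    (hb ▸ (dvd_pow_self 3 k.succ_ne_zero).mul_right _) (ν := ν) (by linarith)
  refine ⟨r, s, μ, hrs, ?_, by linarith, hnorm⟩
  rw [pow_succ] at hb
  linarith

theorem three_pow_le_of_cube_add_cube_add_eq_zero {p q z : ℤ} {c : ℕ} (hpq : IsCoprime p q)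
    (hz : z ≠ 0) (h : p ^ 3 + q ^ 3 + 9 * z ^ 3 = 0) (hc : 3 ^ c ∣ z) :
    3 ^ (54 * c) ≤ 3 ^ 36 * 2 ^ 18 * (p ^ 2 - p * q + q ^ 2) := by
  have hadd : p + q ≠ 0 := fun h0 => hz (by
    simpa using (by linear_combination h - (p ^ 2 - p * q + q ^ 2) * h0 : 9 * z ^ 3 = 0))
  rcases c with _ | c
  · have : 0 < p ^ 2 - p * q + q ^ 2 := by
      nlinarith [sq_nonneg (p - q), sq_pos_of_ne_zero hadd]
    rw [mul_zero, pow_zero]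
    linarith
  obtain ⟨w, rfl⟩ := hc
  obtain ⟨r, s, μ, hrs, hmul, hadd', hnorm⟩ :=
    exists_isCoprime_mul_mul_sub_eq (k := 3 * c + 2) (w := -w) hpq (by linear_combination h)
  have hbound := three_pow_le_of_mul_mul_sub_eq hrs (fun h0 => hadd (by rw [hadd', h0, mul_zero]))
    hmul
  calc (3 : ℤ) ^ (54 * (c + 1)) = 3 ^ 36 * (3 ^ (6 * (3 * c + 1))) ^ 3 := by ring
    _ ≤ 3 ^ 36 * (64 * (r ^ 2 - r * s + s ^ 2)) ^ 3 := by gcongr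
    _ ≤ 3 ^ 36 * 2 ^ 18 * (p ^ 2 - p * q + q ^ 2) := by
      have : 0 ≤ (r ^ 2 - r * s + s ^ 2) ^ 3 :=
        pow_nonneg (by nlinarith [sq_nonneg (r - s), sq_nonneg (r + s)]) 3
      rw [hnorm]
      linarith

end Descent

section PrimitiveSolutions

/-- `(p, q, z)` is a nondegenerate solution in integers, with `p` and `q` coprime, of the system
`Z₁³ + Z₂³ + 9Z₃³ = 0`, `3^a Z₁ + 3^b Z₂ + Z₃ = 0`. -/
structure IsPrimitiveSolution (a b p q z : ℤ) : Prop where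
  isCoprime : IsCoprime p q
  left_ne_zero : p ≠ 0
  right_ne_zero : q ≠ 0
  third_ne_zero : z ≠ 0
  cubic : p ^ 3 + q ^ 3 + 9 * z ^ 3 = 0
  linear : (3 : ℚ) ^ a * p + 3 ^ b * q + z = 0

namespace IsPrimitiveSolution

variable {a b p q z : ℤ}

theorem symm (h : IsPrimitiveSolution a b p q z) : IsPrimitiveSolution b a q p z where
  isCoprime := h.isCoprime.symm
  left_ne_zero := h.right_ne_zero
  right_ne_zero := h.left_ne_zero
  third_ne_zero := h.third_ne_zero
  cubic := by linear_combination h.cubic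
  linear := by linear_combination h.linear

theorem not_three_dvd (h : IsPrimitiveSolution a b p q z) : ¬ 3 ∣ p := by
  have h3 : 3 ∣ p + q := three_dvd_add_of_three_dvd_cube_add_cube
    ⟨-(3 * z ^ 3), by linear_combination h.cubic⟩
  exact fun hp => not_three_dvd_mul_of_three_dvd_add h.isCoprime h3 (hp.mul_right q)

theorem nonneg_of_lt (h : IsPrimitiveSolution a b p q z) (hab : a < b) : 0 ≤ a := by
  by_contra! ha
  obtain ⟨l, hl⟩ := Int.eq_ofNat_of_zero_le (show 0 ≤ -a - 1 by omega)
  obtain ⟨k, hk⟩ := Int.eq_ofNat_of_zero_le (show 0 ≤ b - a - 1 by omega)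
  obtain rfl : a = -(l + 1 : ℕ) := by omega
  obtain rfl : b = (k + 1 : ℕ) + -(l + 1 : ℕ) := by omega
  have hlinear := h.linear
  rw [zpow_add₀ three_ne_zero, zpow_neg, zpow_natCast, zpow_natCast] at hlinear
  field_simp at hlinear
  have hlinear' : p + 3 ^ (k + 1) * q + 3 ^ (l + 1) * z = 0 := by
    exact_mod_cast (by linear_combination hlinear :
      (p + 3 ^ (k + 1) * q + 3 ^ (l + 1) * z : ℚ) = 0)
  exact h.not_three_dvd ⟨-(3 ^ k * q + 3 ^ l * z), by linear_combination hlinear'⟩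

theorem exists_nat_eq_of_lt (h : IsPrimitiveSolution a b p q z) (hab : a < b) :
    ∃ c k : ℕ, a = c ∧ b = c + k ∧ z = -(3 ^ c * (p + 3 ^ k * q)) := by
  obtain ⟨c, rfl⟩ := Int.eq_ofNat_of_zero_le (h.nonneg_of_lt hab)
  obtain ⟨k, rfl⟩ := Int.le.dest hab.le
  refine ⟨c, k, rfl, rfl, ?_⟩
  have hlinear := h.linear
  rw [zpow_add₀ three_ne_zero, zpow_natCast, zpow_natCast] at hlinear
  exact_mod_cast (by linear_combination hlinear : (z : ℚ) = -(3 ^ c * (p + 3 ^ k * q)))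

theorem third_abs_le (h : IsPrimitiveSolution a b p q z) {X : ℤ} (hp : |p| ≤ X) (hq : |q| ≤ X) :
    |z| ≤ X := by
  have hX : 0 ≤ X := (abs_nonneg p).trans hp
  refine le_of_pow_le_pow_left₀ three_ne_zero hX ?_
  have hcube : 9 * |z| ^ 3 ≤ 2 * X ^ 3 :=
    calc 9 * |z| ^ 3 = |p ^ 3 + q ^ 3| := by
          rw [show p ^ 3 + q ^ 3 = -9 * z ^ 3 by linear_combination h.cubic, abs_mul, abs_pow]
          rfl
      _ ≤ |p| ^ 3 + |q| ^ 3 := (abs_add_le _ _).trans_eq (by rw [abs_pow, abs_pow])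
      _ ≤ X ^ 3 + X ^ 3 := by gcongr
      _ = 2 * X ^ 3 := by ring
  linarith [pow_nonneg hX 3]

theorem exponents_abs_le_of_lt (h : IsPrimitiveSolution a b p q z) (hab : a < b) {X : ℤ}
    (hp : |p| ≤ X) (hq : |q| ≤ X) : |a| ≤ 3 * X ∧ |b| ≤ 3 * X := by
  have hzX := h.third_abs_le hp hq
  obtain ⟨c, k, rfl, rfl, hz⟩ := h.exists_nat_eq_of_lt hab
  have hc : (c : ℤ) < 3 ^ c := by exact_mod_cast Nat.lt_pow_self (by norm_num)
  have hk : (k : ℤ) < 3 ^ k := by exact_mod_cast Nat.lt_pow_self (by norm_num)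
  have hcz : 3 ^ c ≤ |z| := Int.le_of_dvd (abs_pos.mpr h.third_ne_zero)
    ((dvd_abs _ _).mpr ⟨-(p + 3 ^ k * q), by rw [hz]; ring⟩)
  have hkz : (3 : ℤ) ^ k ≤ |z| + |p| :=
    calc (3 : ℤ) ^ k ≤ |3 ^ k * q| := by
          rw [abs_mul, abs_of_pos (by positivity : (0 : ℤ) < 3 ^ k)]
          exact le_mul_of_one_le_right (by positivity) (Int.one_le_abs h.right_ne_zero)
      _ ≤ |p + 3 ^ k * q| + |p| := by
          simpa using abs_sub (p + 3 ^ k * q) p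
      _ ≤ |z| + |p| := by
          rw [hz, abs_neg, abs_mul, abs_of_pos (by positivity : (0 : ℤ) < 3 ^ c)]
          gcongr
          exact le_mul_of_one_le_left (abs_nonneg _) (one_le_pow₀ (by norm_num))
  rw [abs_of_nonneg (by positivity), abs_of_nonneg (by positivity)]
  omega

theorem abs_le_three_pow {c k : ℕ} (h : IsPrimitiveSolution a b p q z)
    (hz : z = -(3 ^ c * (p + 3 ^ k * q))) : |q| ≤ 3 ^ (3 * c + 2) := by
  have hdvd : q ∣ p ^ 3 * (3 ^ (3 * c + 2) - 1) := by
    have hcubic := h.cubic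
    rw [hz] at hcubic
    exact ⟨q ^ 2 - 9 * (3 ^ c) ^ 3 * (3 * p ^ 2 * 3 ^ k + 3 * p * (3 ^ k) ^ 2 * q +
      (3 ^ k) ^ 3 * q ^ 2), by linear_combination -hcubic⟩
  have hpos : (0 : ℤ) < 3 ^ (3 * c + 2) - 1 :=
    sub_pos.mpr (one_lt_pow₀ (by norm_num) (by omega))
  have := Int.le_of_dvd hpos
    ((abs_dvd q _).mpr (h.isCoprime.symm.pow_right.dvd_of_dvd_mul_left hdvd))
  linarith

theorem pow_eighteen_le_of_lt (h : IsPrimitiveSolution a b p q z) (hab : a < b) :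
    q ^ 18 ≤ 3 ^ 72 * 2 ^ 18 * (p ^ 2 - p * q + q ^ 2) := by
  obtain ⟨c, k, rfl, rfl, hz⟩ := h.exists_nat_eq_of_lt hab
  calc q ^ 18 = |q| ^ 18 := (Even.pow_abs (by decide) q).symm
    _ ≤ (3 ^ (3 * c + 2)) ^ 18 := by gcongr; exact h.abs_le_three_pow hz
    _ = 3 ^ 36 * 3 ^ (54 * c) := by ring
    _ ≤ 3 ^ 36 * (3 ^ 36 * 2 ^ 18 * (p ^ 2 - p * q + q ^ 2)) := by
      gcongr
      exact three_pow_le_of_cube_add_cube_add_eq_zero h.isCoprime h.third_ne_zero h.cubic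
        ⟨-(p + 3 ^ k * q), by rw [hz]; ring⟩
    _ = 3 ^ 72 * 2 ^ 18 * (p ^ 2 - p * q + q ^ 2) := by ring

theorem right_abs_le_of_lt_of_abs_le (h : IsPrimitiveSolution a b p q z) (hab : a < b)
    (hpq : |p| ≤ |q|) : |q| ≤ 3 ^ 73 * 2 ^ 18 := by
  have hq : 0 < q ^ 2 := sq_pos_of_ne_zero h.right_ne_zero
  have hnorm : p ^ 2 - p * q + q ^ 2 ≤ 3 * q ^ 2 := by
    nlinarith [sq_nonneg (p + q), sq_le_sq.mpr hpq]
  refine (le_self_pow₀ (Int.one_le_abs h.right_ne_zero) (by norm_num : 16 ≠ 0)).trans ?_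
  rw [Even.pow_abs (by decide)]
  refine le_of_mul_le_mul_right ?_ hq
  linarith [h.pow_eighteen_le_of_lt hab, pow_add q 16 2]

theorem abs_cube_le_of_lt_of_abs_le (h : IsPrimitiveSolution a b p q z) (hab : a < b)
    (hpq : |q| ≤ |p|) : |(q : ℝ)| ^ 3 ≤ 3 ^ 13 * 2 ^ 3 * |(p : ℝ)| ^ (1 / 3 : ℝ) := by
  have hnorm : p ^ 2 - p * q + q ^ 2 ≤ 3 * p ^ 2 := by
    nlinarith [sq_nonneg (p + q), sq_le_sq.mpr hpq]
  have hpow : q ^ 18 ≤ 3 ^ 78 * 2 ^ 18 * p ^ 2 := by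
    linarith [h.pow_eighteen_le_of_lt hab, sq_nonneg p]
  refine le_of_pow_le_pow_left₀ (n := 6) (by norm_num) (by positivity) ?_
  calc (|(q : ℝ)| ^ 3) ^ 6 = (q : ℝ) ^ 18 := by
        rw [← pow_mul, Even.pow_abs (by decide)]
    _ ≤ 3 ^ 78 * 2 ^ 18 * (p : ℝ) ^ 2 := by exact_mod_cast hpow
    _ = (3 ^ 13 * 2 ^ 3 * |(p : ℝ)| ^ (1 / 3 : ℝ)) ^ 6 := by
      rw [mul_pow _ (_ ^ (1 / 3 : ℝ)), ← Real.rpow_mul_natCast (abs_nonneg _), ← sq_abs (p : ℝ),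
        ← Real.rpow_natCast |(p : ℝ)| 2]
      norm_num

end IsPrimitiveSolution

theorem exists_abs_le_of_isPrimitiveSolution_of_lt :
    ∃ X : ℤ, ∀ a b p q z : ℤ, IsPrimitiveSolution a b p q z → a < b → |p| ≤ X ∧ |q| ≤ X := by
  obtain ⟨B, hB⟩ := exists_abs_le_of_abs_cube_add_le 9 (3 ^ 13 * 2 ^ 3)
    (by norm_num : (1 / 3 : ℝ) < 1 / 2)
  refine ⟨max (3 ^ 73 * 2 ^ 18) ⌊B⌋, fun a b p q z h hab => ?_⟩
  rcases le_total |p| |q| with hle | hle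
  · have hq := (h.right_abs_le_of_lt_of_abs_le hab hle).trans (le_max_left _ ⌊B⌋)
    exact ⟨hle.trans hq, hq⟩
  · have hsum : p ^ 3 + 9 * z ^ 3 = -q ^ 3 := by linear_combination h.cubic
    have hpB : |(p : ℝ)| ≤ B := by
      refine hB p z (hsum ▸ neg_ne_zero.mpr (pow_ne_zero 3 h.right_ne_zero)) ?_
      rw [hsum, Int.cast_neg, abs_neg, Int.cast_pow, abs_pow]
      exact h.abs_cube_le_of_lt_of_abs_le hab hle
    have hp : |p| ≤ max (3 ^ 73 * 2 ^ 18) ⌊B⌋ :=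
      (Int.le_floor.mpr (by exact_mod_cast hpB)).trans (le_max_right _ _)
    exact ⟨hp, hle.trans hp⟩

theorem finite_setOf_isPrimitiveSolution_of_lt :
    {x : ℤ × ℤ | x.1 < x.2 ∧ ∃ p q z, IsPrimitiveSolution x.1 x.2 p q z}.Finite := by
  obtain ⟨X, hX⟩ := exists_abs_le_of_isPrimitiveSolution_of_lt
  refine (finite_setOf_abs_le (3 * X)).subset ?_
  rintro ⟨a, b⟩ ⟨hab, p, q, z, h⟩
  obtain ⟨hp, hq⟩ := hX a b p q z h hab
  exact_mod_cast h.exponents_abs_le_of_lt hab hp hq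

theorem finite_setOf_isPrimitiveSolution_of_ne :
    {x : ℤ × ℤ | x.1 ≠ x.2 ∧ ∃ p q z, IsPrimitiveSolution x.1 x.2 p q z}.Finite := by
  have hlt := finite_setOf_isPrimitiveSolution_of_lt
  refine (hlt.union (hlt.preimage Prod.swap_injective.injOn)).subset ?_
  rintro ⟨a, b⟩ ⟨hab, p, q, z, h⟩
  exact hab.lt_or_gt.imp (fun hlt => ⟨hlt, p, q, z, h⟩) fun hgt => ⟨hgt, q, p, z, h.symm⟩

end PrimitiveSolutions

section AffineSolutions

universe u

variable {K L : Type*} [Field K] [Field L] {a b : ℤ} {t : K}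

/-- `[t : 1 : -(3^a t + 3^b)]` is a nondegenerate solution of the system, the last coordinate having
been eliminated by means of the linear equation. -/
structure IsAffineSolution (a b : ℤ) (t : K) : Prop where
  ne_zero : t ≠ 0
  linear_ne_zero : 3 ^ a * t + 3 ^ b ≠ 0
  cubic : t ^ 3 + 1 = 9 * (3 ^ a * t + 3 ^ b) ^ 3

/-- The cubic `T³ + 1 - 9(xT + y)³`, whose roots for `x = 3^a`, `y = 3^b` include the affine
solutions. -/
def solutionCubic (x y : K) : Cubic K :=
  ⟨1 - 9 * x ^ 3, -27 * x ^ 2 * y, -27 * x * y ^ 2, 1 - 9 * y ^ 3⟩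

theorem discr_solutionCubic (x y : K) : (solutionCubic x y).discr =
    -27 * ((9 * x ^ 3 - 9 * y ^ 3 - 1) ^ 2 - 4 * (9 * y ^ 3)) := by
  simp only [Cubic.discr, solutionCubic]
  ring

theorem map_solutionCubic (f : K →+* L) (x y : K) :
    (solutionCubic x y).map f = solutionCubic (f x) (f y) := by
  simp [Cubic.map, solutionCubic, map_ofNat f]

theorem zpow_three_mul_add_two [CharZero K] (n : ℤ) : (3 : K) ^ (3 * n + 2) = 9 * (3 ^ n) ^ 3 := by
  rw [zpow_add₀ three_ne_zero, mul_comm 3 n, zpow_mul]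
  norm_cast
  ring

theorem solutionCubic_toPoly_ne_zero [CharZero K] (a b : ℤ) :
    (solutionCubic ((3 : K) ^ a) (3 ^ b)).toPoly ≠ 0 := by
  refine Cubic.ne_zero_of_a_ne_zero fun (h : 1 - 9 * ((3 : K) ^ a) ^ 3 = 0) => ?_
  have hpow : (3 : ℚ) ^ (3 * a + 2) = 1 := Rat.cast_injective (α := K) (by
    push_cast
    rw [zpow_three_mul_add_two]
    linear_combination -h)
  rw [zpow_eq_one_iff_right₀ (by norm_num) (by norm_num)] at hpow
  omega

theorem isRoot_toPoly_iff {P : Cubic K} :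
    P.toPoly.IsRoot t ↔ P.a * t ^ 3 + P.b * t ^ 2 + P.c * t + P.d = 0 := by
  simp [Cubic.toPoly]

theorem exists_sq_eq_discr_of_roots {P : Cubic K} {s t : K} (hst : s ≠ t)
    (hs : P.toPoly.IsRoot s) (ht : P.toPoly.IsRoot t) : ∃ r : K, r ^ 2 = P.discr := by
  rw [isRoot_toPoly_iff] at hs ht
  have hc : P.c = -(P.a * (s ^ 2 + s * t + t ^ 2)) - P.b * (s + t) :=
    mul_left_cancel₀ (sub_ne_zero.mpr hst) (by linear_combination hs - ht)
  have hd : P.d = s * t * (P.b + P.a * (s + t)) := by linear_combination hs - s * hc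
  refine ⟨(s - t) * (P.a * (2 * s + t) + P.b) * (P.a * (s + 2 * t) + P.b), ?_⟩
  rw [Cubic.discr, hc, hd]
  ring

theorem exists_intCast_eq_of_nine_mul_cube_eq {z : ℚ} {m : ℤ} (h : 9 * z ^ 3 = m) :
    ∃ n : ℤ, (n : ℚ) = z := by
  have hdvd : (z.den : ℤ) ^ 3 ∣ 9 * z.num ^ 3 := by
    refine ⟨m, ?_⟩
    have : (9 * z.num ^ 3 : ℚ) = z.den ^ 3 * m := by
      rw [← Rat.mul_den_eq_num z, ← h]
      ring
    exact_mod_cast this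
  have hcoprime : IsCoprime ((z.den : ℤ) ^ 3) (z.num ^ 3) :=
    (Int.isCoprime_iff_nat_coprime.mpr z.reduced).symm.pow
  have hden : z.den ^ 3 ∣ 9 := by exact_mod_cast hcoprime.dvd_of_dvd_mul_right hdvd
  have hlt : z.den < 3 := by
    refine lt_of_pow_lt_pow_left₀ 3 (by norm_num) ((Nat.le_of_dvd (by norm_num) hden).trans_lt ?_)
    norm_num
  refine ⟨z.num, Rat.coe_int_num_of_den_eq_one ?_⟩
  interval_cases hd : z.den
  · exact absurd hd z.den_ne_zero
  · rfl
  · norm_num at hden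

namespace IsAffineSolution

theorem map_iff (f : K →+* L) : IsAffineSolution a b (f t) ↔ IsAffineSolution a b t := by
  have hlinear : 3 ^ a * f t + 3 ^ b = f (3 ^ a * t + 3 ^ b) := by
    rw [map_add, map_mul, map_zpow₀, map_zpow₀, map_ofNat]
  have hcubic : f t ^ 3 + 1 = 9 * f (3 ^ a * t + 3 ^ b) ^ 3 ↔
      t ^ 3 + 1 = 9 * (3 ^ a * t + 3 ^ b) ^ 3 := by
    rw [← map_pow, ← map_pow, ← map_one f, ← map_add, ← map_ofNat f 9, ← map_mul,
      f.injective.eq_iff]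
  constructor
  · rintro ⟨h₀, h₁, h₂⟩
    rw [hlinear] at h₁ h₂
    exact ⟨(map_ne_zero f).mp h₀, (map_ne_zero f).mp h₁, hcubic.mp h₂⟩
  · rintro ⟨h₀, h₁, h₂⟩
    exact ⟨(map_ne_zero f).mpr h₀, hlinear ▸ (map_ne_zero f).mpr h₁, hlinear ▸ hcubic.mpr h₂⟩

theorem isRoot (h : IsAffineSolution a b t) :
    (solutionCubic ((3 : K) ^ a) (3 ^ b)).toPoly.IsRoot t := by
  rw [isRoot_toPoly_iff, solutionCubic]
  linear_combination h.cubic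

theorem isAlgebraic [CharZero K] (h : IsAffineSolution a b t) : IsAlgebraic ℚ t := by
  refine ⟨(solutionCubic ((3 : ℚ) ^ a) (3 ^ b)).toPoly, solutionCubic_toPoly_ne_zero a b, ?_⟩
  rw [Polynomial.aeval_def, ← Polynomial.eval_map, ← Cubic.map_toPoly, map_solutionCubic, map_zpow₀,
    map_zpow₀, map_ofNat]
  exact h.isRoot

theorem exists_sq_eq_discr_of_eq (h : IsAffineSolution a a t) :
    ∃ r : K, r ^ 2 = (solutionCubic ((3 : K) ^ a) (3 ^ a)).discr := by
  have ht : t + 1 ≠ 0 := fun ht => h.linear_ne_zero (by linear_combination (3 : K) ^ a * ht)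
  have hquad : t ^ 2 - t + 1 = 9 * (3 ^ a) ^ 3 * (t + 1) ^ 2 :=
    mul_left_cancel₀ ht (by linear_combination h.cubic)
  refine ⟨3 * (2 * (1 - 9 * (3 ^ a) ^ 3) * t - (1 + 2 * (9 * (3 ^ a) ^ 3))), ?_⟩
  rw [discr_solutionCubic]
  linear_combination 36 * (1 - 9 * ((3 : K) ^ a) ^ 3) * hquad

theorem exists_sq_eq_discr_of_notMem_range [Algebra ℚ K] [FiniteDimensional ℚ K] [IsGalois ℚ K]
    (h : IsAffineSolution a b t) (ht : t ∉ Set.range (algebraMap ℚ K)) :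
    ∃ r : K, r ^ 2 = (solutionCubic ((3 : K) ^ a) (3 ^ b)).discr := by
  rw [IsGalois.mem_range_algebraMap_iff_fixed] at ht
  push Not at ht
  obtain ⟨σ, hσ⟩ := ht
  have hσt : IsAffineSolution a b (σ t) := (map_iff (σ : K →+* K)).mpr h
  exact exists_sq_eq_discr_of_roots hσ hσt.isRoot h.isRoot

theorem exists_isPrimitiveSolution {t : ℚ} (h : IsAffineSolution a b t) :
    ∃ p q z : ℤ, IsPrimitiveSolution a b p q z := by
  have hden : (t.den : ℚ) ≠ 0 := by exact_mod_cast t.den_ne_zero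
  have hcubic : (t.num : ℚ) ^ 3 + t.den ^ 3 + 9 * (-(t.den * (3 ^ a * t + 3 ^ b))) ^ 3 = 0 := by
    rw [← Rat.mul_den_eq_num t]
    linear_combination (t.den : ℚ) ^ 3 * h.cubic
  obtain ⟨z, hz⟩ := exists_intCast_eq_of_nine_mul_cube_eq
    (z := -(t.den * (3 ^ a * t + 3 ^ b))) (m := -(t.num ^ 3 + t.den ^ 3))
    (by push_cast; linear_combination hcubic)
  rw [← hz] at hcubic
  refine ⟨t.num, t.den, z, Int.isCoprime_iff_nat_coprime.mpr t.reduced,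
    Rat.num_ne_zero.mpr h.ne_zero, by exact_mod_cast t.den_ne_zero, ?_,
    by exact_mod_cast hcubic, ?_⟩
  · exact_mod_cast hz ▸ neg_ne_zero.mpr (mul_ne_zero hden h.linear_ne_zero)
  · rw [hz, ← Rat.mul_den_eq_num t]
    push_cast
    ring

end IsAffineSolution

theorem finite_setOf_isAffineSolution_right [CharZero K] (a b : ℤ) :
    {t : K | IsAffineSolution a b t}.Finite :=
  (Polynomial.finite_setOfPred_isRoot (solutionCubic_toPoly_ne_zero a b)).subset fun _ h => h.isRoot

theorem finite_setOf_sq_eq_discr_solutionCubic (M : Type*) [Field M] [Algebra ℚ M]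
    [FiniteDimensional ℚ M] :
    {x : ℤ × ℤ | ∃ r : M, r ^ 2 = (solutionCubic ((3 : M) ^ x.1) (3 ^ x.2)).discr}.Finite := by
  have : CharZero M := algebraRat.charZero M
  have hinj : Function.Injective fun x : ℤ × ℤ => (3 * x.1 + 2, 3 * x.2 + 2) := by
    rintro ⟨a, b⟩ ⟨a', b'⟩ h
    simp only [Prod.mk.injEq] at h ⊢
    omega
  refine ((finite_setOf_sq_eq_const_mul_discriminant 3 M
    (by norm_num : (-27 : M) ≠ 0)).preimage hinj.injOn).subset ?_
  rintro ⟨a, b⟩ ⟨r, hr⟩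
  refine ⟨r, ?_⟩
  rw [hr, discr_solutionCubic, Nat.cast_ofNat, zpow_three_mul_add_two, zpow_three_mul_add_two]

theorem finite_setOf_exists_isAffineSolution_of_isGalois (M : Type*) [Field M] [Algebra ℚ M]
    [FiniteDimensional ℚ M] [IsGalois ℚ M] :
    {x : ℤ × ℤ | ∃ t : M, IsAffineSolution x.1 x.2 t}.Finite := by
  refine ((finite_setOf_sq_eq_discr_solutionCubic M).union
    finite_setOf_isPrimitiveSolution_of_ne).subset ?_
  rintro ⟨a, b⟩ ⟨t, h⟩
  obtain rfl | hab := eq_or_ne a b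
  · exact Or.inl h.exists_sq_eq_discr_of_eq
  by_cases ht : t ∈ Set.range (algebraMap ℚ M)
  · obtain ⟨t, rfl⟩ := ht
    exact Or.inr ⟨hab, ((IsAffineSolution.map_iff _).mp h).exists_isPrimitiveSolution⟩
  · exact Or.inl (h.exists_sq_eq_discr_of_notMem_range ht)

theorem exists_isGalois_algHom (k : Type*) (E : Type u) [Field k] [CharZero k] [Field E]
    [Algebra k E] [FiniteDimensional k E] : ∃ (M : Type u) (_ : Field M) (_ : Algebra k M),
      FiniteDimensional k M ∧ IsGalois k M ∧ Nonempty (E →ₐ[k] M) := by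
  have : IsAlgClosure k (AlgebraicClosure E) := ⟨inferInstance, .trans k E _⟩
  have : Normal k (AlgebraicClosure E) := IsAlgClosure.normal k _
  exact ⟨IntermediateField.normalClosure k E (AlgebraicClosure E), inferInstance, inferInstance,
    inferInstance, ⟨⟩, ⟨Algebra.algHom k E _⟩⟩

theorem finite_setOf_exists_isAffineSolution_of_finiteDimensional (E : Type*) [Field E]
    [Algebra ℚ E] [FiniteDimensional ℚ E] :
    {x : ℤ × ℤ | ∃ t : E, IsAffineSolution x.1 x.2 t}.Finite := by
  obtain ⟨M, _, _, _, _, ⟨f⟩⟩ := exists_isGalois_algHom ℚ E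
  exact (finite_setOf_exists_isAffineSolution_of_isGalois M).subset fun _ ⟨t, h⟩ =>
    ⟨f t, (IsAffineSolution.map_iff (f : E →+* M)).mpr h⟩

theorem finite_setOf_exists_isAffineSolution (F : Type*) [Field F] [CharZero F]
    [FiniteDimensional ℚ (algebraicClosure ℚ F)] :
    {x : ℤ × ℤ | ∃ t : F, IsAffineSolution x.1 x.2 t}.Finite :=
  (finite_setOf_exists_isAffineSolution_of_finiteDimensional (algebraicClosure ℚ F)).subset
    fun _ ⟨t, h⟩ => ⟨⟨t, mem_algebraicClosure_iff.mpr h.isAlgebraic⟩,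
      (IsAffineSolution.map_iff (algebraMap (algebraicClosure ℚ F) F)).mp h⟩

end AffineSolutions

section FinitelyGenerated

open IntermediateField
open scoped IntermediateField.algebraAdjoinAdjoin

variable {k F : Type*} [Field k] [Field F] [Algebra k F]

theorem linearIndependent_adjoin_of_algebraicIndependent {s : Set F}
    (hs : AlgebraicIndependent k ((↑) : s → F)) {ι : Type*} {b : ι → algebraicClosure k F}
    (hb : LinearIndependent k b) :
    LinearIndependent (Algebra.adjoin k s) fun i => (b i : F) := by
  rw [linearIndependent_iff']
  intro t g hg i hi
  have hex : ∀ i, ∃ P : MvPolynomial s k, MvPolynomial.aeval ((↑) : s → F) P = (g i : F) :=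
    fun i => (SetLike.ext_iff.mp (Algebra.adjoin_eq_range k s) _).mp (g i).2
  choose P hP using hex
  have hsum : ∑ i ∈ t, MvPolynomial.C (b i) *
      (P i).map (algebraMap k (algebraicClosure k F)) = 0 := by
    refine algebraicIndependent_iff.mp hs.algebraicClosure _ ?_
    rw [map_sum, ← hg]
    refine Finset.sum_congr rfl fun i _ => ?_
    rw [map_mul, MvPolynomial.aeval_C, MvPolynomial.aeval_map_algebraMap, hP, mul_comm]
    rfl
  have hPi : P i = 0 := by
    ext m
    refine linearIndependent_iff'.mp hb t (fun i => MvPolynomial.coeff m (P i)) ?_ i hi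
    simpa only [MvPolynomial.coeff_sum, MvPolynomial.coeff_C_mul, MvPolynomial.coeff_map,
      MvPolynomial.coeff_zero, Algebra.smul_def, mul_comm]
      using congrArg (MvPolynomial.coeff m) hsum
  exact Subtype.ext (by rw [← hP i, hPi, map_zero]; rfl)

theorem finiteDimensional_algebraicClosure_of_adjoin_eq_top {S : Finset F}
    (hS : adjoin k (S : Set F) = ⊤) : FiniteDimensional k (algebraicClosure k F) := by
  have : Algebra.EssFiniteType k F := fg_top_iff.mp ⟨S, hS⟩
  obtain ⟨s, hs⟩ := exists_isTranscendenceBasis k F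
  have : Algebra.EssFiniteType (adjoin k s) F := .of_comp k _ _
  have : Algebra.IsAlgebraic (adjoin k s) F := by
    convert! hs.isAlgebraic_field <;> simp
  have : Module.Finite (adjoin k s) F := Algebra.finite_of_essFiniteType_of_isAlgebraic
  let b := Module.Basis.ofVectorSpace k (algebraicClosure k F)
  have hb := linearIndependent_adjoin_of_algebraicIndependent hs.1 b.linearIndependent
  rw [LinearIndependent.iff_fractionRing (Algebra.adjoin k s) (adjoin k s)] at hb
  have := hb.finite
  exact Module.Finite.of_basis b

end FinitelyGenerated

theorem exists_isAffineSolution_and_eq_smul {F : Type*} [Field F] {a b : ℤ} {Z : Fin 3 → F}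
    (hZ : Z 0 * Z 1 * Z 2 ≠ 0) (hcubic : Z 0 ^ 3 + Z 1 ^ 3 + 9 * Z 2 ^ 3 = 0)
    (hlinear : (3 : F) ^ a * Z 0 + (3 : F) ^ b * Z 1 + Z 2 = 0) :
    ∃ t, IsAffineSolution a b t ∧ Z = Z 1 • ![t, 1, -(3 ^ a * t + 3 ^ b)] := by
  obtain ⟨⟨h0, h1⟩, h2⟩ : (Z 0 ≠ 0 ∧ Z 1 ≠ 0) ∧ Z 2 ≠ 0 := by
    simpa only [mul_ne_zero_iff] using hZ
  obtain ⟨t, ht⟩ : ∃ t, Z 0 = Z 1 * t := ⟨Z 0 / Z 1, (mul_div_cancel₀ _ h1).symm⟩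
  have hZ2 : Z 2 = Z 1 * -(3 ^ a * t + 3 ^ b) := by
    rw [ht] at hlinear
    linear_combination hlinear
  refine ⟨t, ⟨?_, ?_, ?_⟩, ?_⟩
  · exact right_ne_zero_of_mul (ht ▸ h0)
  · exact neg_ne_zero.mp (right_ne_zero_of_mul (hZ2 ▸ h2))
  · refine mul_left_cancel₀ (pow_ne_zero 3 h1) ?_
    rw [ht, hZ2] at hcubic
    linear_combination hcubic
  · ext j
    fin_cases j
    · exact ht
    · exact (mul_one _).symm
    · exact hZ2

theorem finitely_many_nondegenerate_solutions_of_example_system_general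
    (F : Type*) [Field F] [CharZero F] [FiniteDimensional ℚ (algebraicClosure ℚ F)] :
    {x : ℤ × ℤ × Projectivization F (Fin 3 → F) |
      ∃ (Z : Fin 3 → F) (hZ : Z ≠ 0), x.2.2 = Projectivization.mk F Z hZ ∧
        Z 0 * Z 1 * Z 2 ≠ 0 ∧
        Z 0 ^ 3 + Z 1 ^ 3 + 9 * Z 2 ^ 3 = 0 ∧
        (3 : F) ^ x.1 * Z 0 + (3 : F) ^ x.2.1 * Z 1 + Z 2 = 0}.Finite := by
  have hne : ∀ (a b : ℤ) (t : F), ![t, 1, -(3 ^ a * t + 3 ^ b)] ≠ 0 := fun a b t h =>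
    one_ne_zero (congrFun h 1)
  refine ((finite_setOf_exists_isAffineSolution F).biUnion fun x _ =>
    (finite_setOf_isAffineSolution_right x.1 x.2).image fun t =>
      (x.1, x.2, Projectivization.mk F _ (hne x.1 x.2 t))).subset ?_
  rintro ⟨a, b, P⟩ ⟨Z, hZ, rfl, hnd, hcubic, hlinear⟩
  obtain ⟨t, ht, hZt⟩ := exists_isAffineSolution_and_eq_smul (a := a) (b := b) hnd hcubic hlinear
  refine Set.mem_biUnion (x := (a, b)) ⟨t, ht⟩ ⟨t, ht, ?_⟩
  refine congrArg (fun P => (a, b, P)) (Eq.symm ?_)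
  exact (Projectivization.mk_eq_mk_iff' F _ _ _ _).mpr ⟨Z 1, hZt.symm⟩

/-- **Example `eg:system P`:** for `F₀` a finitely generated field of characteristic `0`,
the system `Z₁³ + Z₂³ + 9Z₃³ = 0`, `3^a Z₁ + 3^b Z₂ + Z₃ = 0` has only finitely many
solutions `(a, b, [Z₁:Z₂:Z₃])` with `a, b ∈ ℤ`, `[Z₁:Z₂:Z₃] ∈ ℙ²(F₀)` and `Z₁Z₂Z₃ ≠ 0`. -/
theorem finitely_many_nondegenerate_solutions_of_example_system
    (F₀ : Type) [Field F₀] [CharZero F₀]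
    (hfg : ∃ S : Finset F₀, IntermediateField.adjoin ℚ (S : Set F₀) = ⊤) :
    {x : ℤ × ℤ × Projectivization F₀ (Fin 3 → F₀) |
      ∃ (Z : Fin 3 → F₀) (hZ : Z ≠ 0), x.2.2 = Projectivization.mk F₀ Z hZ ∧
        Z 0 * Z 1 * Z 2 ≠ 0 ∧
        Z 0 ^ 3 + Z 1 ^ 3 + 9 * Z 2 ^ 3 = 0 ∧
        (3 : F₀) ^ x.1 * Z 0 + (3 : F₀) ^ x.2.1 * Z 1 + Z 2 = 0}.Finite := by
  have := finiteDimensional_algebraicClosure_of_adjoin_eq_top hfg.choose_spec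
  exact finitely_many_nondegenerate_solutions_of_example_system_general F₀
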